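/- arXiv:1211.5755 — 2 statements merged into one kernel-verified Lean document; each statement's English description precedes it below -/
import Mathlib

section
/- Let G be a connected simple graph on {1,…,d} that does not satisfy the odd cycle condition, and let P_G be its edge polytope. Then μ_va(P_G) = μ_Hilb(P_G) = max{ (ℓ(C)+ℓ(C'))/2 : (C,C') an exceptional pair of minimal odd cycles in G }, where ℓ denotes cycle length. -/
open scoped BigOperators Pointwise

/-- Points of `ℝ^N`. -/
abbrev Pt (N : ℕ) := Fin N → ℝ

/-- A point has integer coordinates. -/
def IsLat {N : ℕ} (x : Pt N) : Prop := ∀ i, ∃ z : ℤ, x i = (z : ℝ)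

/-- Lattice points of a set. -/
def latPts {N : ℕ} (P : Set (Pt N)) : Set (Pt N) := {x ∈ P | IsLat x}

/-- The dilated polytope `kP`. -/
def dil {N : ℕ} (k : ℕ) (P : Set (Pt N)) : Set (Pt N) := (k : ℝ) • P

/-- `α` is a sum of `k` lattice points of `P`. -/
def DecomposesIn {N : ℕ} (P : Set (Pt N)) (k : ℕ) (α : Pt N) : Prop :=
  ∃ f : Fin k → Pt N, (∀ i, f i ∈ latPts P) ∧ α = ∑ i, f i

/-- The integer decomposition property. -/
def HasIDP {N : ℕ} (P : Set (Pt N)) : Prop :=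
  ∀ k : ℕ, 0 < k → ∀ α ∈ latPts (dil k P), DecomposesIn P k α

/-- Very ampleness: decomposition holds for all sufficiently large `k`. -/
def VeryAmple {N : ℕ} (P : Set (Pt N)) : Prop :=
  ∃ k₀ : ℕ, ∀ k, k₀ ≤ k → ∀ α ∈ latPts (dil k P), DecomposesIn P k α

/-- An integral convex polytope: the convex hull of finitely many lattice points
(which include all its vertices). -/
def IsIntegralPolytope {N : ℕ} (P : Set (Pt N)) : Prop :=
  ∃ V : Finset (Pt N), (∀ v ∈ V, IsLat v) ∧ P = convexHull ℝ (V : Set (Pt N))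

/-- Dimension of a polytope: the rank of the direction of its affine span. -/
noncomputable def polyDim {N : ℕ} (P : Set (Pt N)) : ℕ :=
  Module.finrank ℝ (affineSpan ℝ P).direction

/-- Lattice points of the cone `C(P) ⊂ ℝ^{N+1}` generated by `P̃ = P × {1}`;
a point of `ℝ^{N+1}` is represented as a pair `(x, deg)`. -/
def coneLat {N : ℕ} (P : Set (Pt N)) : Set (Pt N × ℝ) :=
  {p | (∃ (m : ℕ) (c : Fin m → ℝ) (w : Fin m → Pt N),
        (∀ i, 0 ≤ c i ∧ w i ∈ P) ∧ p.1 = ∑ i, c i • w i ∧ p.2 = ∑ i, c i)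
    ∧ IsLat p.1 ∧ ∃ z : ℤ, p.2 = (z : ℝ)}

/-- The monoid `ℤ_{≥0}(P̃ ∩ ℤ^{N+1})` generated by the degree-one lattice points of the cone. -/
def genMonoid {N : ℕ} (P : Set (Pt N)) : Set (Pt N × ℝ) :=
  {p | ∃ (m : ℕ) (f : Fin m → Pt N), (∀ i, f i ∈ latPts P) ∧
        p.1 = ∑ i, f i ∧ p.2 = (m : ℝ)}

/-- `H` is the minimal Hilbert basis of the cone `C(P)`. -/
def IsMinHilbertBasis {N : ℕ} (P : Set (Pt N)) (H : Set (Pt N × ℝ)) : Prop :=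
  (H.Finite ∧ H ⊆ coneLat P ∧
      coneLat P ⊆ (AddSubmonoid.closure H : Set (Pt N × ℝ))) ∧
  ∀ H' : Set (Pt N × ℝ),
    (H'.Finite ∧ H' ⊆ coneLat P ∧
      coneLat P ⊆ (AddSubmonoid.closure H' : Set (Pt N × ℝ))) → H ⊆ H'

/-- `v` lists the vertices of an empty `d`-simplex contained in `P`. -/
def EmptySimplexIn {N : ℕ} (P : Set (Pt N)) (d : ℕ) (v : Fin (d+1) → Pt N) : Prop :=
  (∀ i, v i ∈ latPts P) ∧ AffineIndependent ℝ v ∧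
    ∀ x ∈ convexHull ℝ (Set.range v), IsLat x → x ∈ Set.range v

/-- `Box(S)` of a simplex with vertex list `v`: lattice points
`Σ rᵢ (vᵢ, 1)` with `0 ≤ rᵢ < 1`. -/
def boxSimplex {N d : ℕ} (v : Fin (d+1) → Pt N) : Set (Pt N × ℝ) :=
  {p | ∃ r : Fin (d+1) → ℝ, (∀ i, 0 ≤ r i ∧ r i < 1) ∧
      p.1 = ∑ i, r i • v i ∧ p.2 = ∑ i, r i ∧ IsLat p.1 ∧ ∃ z : ℤ, p.2 = (z : ℝ)}

/-- `Box(P)`: holes of `P`, i.e. box points of empty `d`-simplices in `P` that are not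
nonnegative integer combinations of `P̃ ∩ ℤ^{N+1}`. -/
def boxP {N : ℕ} (P : Set (Pt N)) (d : ℕ) : Set (Pt N × ℝ) :=
  (⋃ v ∈ {v : Fin (d+1) → Pt N | EmptySimplexIn P d v}, boxSimplex v) \ genMonoid P

/-- Ehrhart counting function `|nP ∩ ℤ^N|`. -/
noncomputable def ehr {N : ℕ} (P : Set (Pt N)) (n : ℕ) : ℕ := (latPts (dil n P)).ncard

/-- The `δ`-vector of a `d`-dimensional polytope, via finite differences of the
Ehrhart counting function. -/
noncomputable def deltaVec {N : ℕ} (P : Set (Pt N)) (d i : ℕ) : ℤ :=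
  ∑ j ∈ Finset.range (i+1), (-1)^j * ((d+1).choose j) * (ehr P (i - j) : ℤ)

/-- The edge polytope `P_G` of a graph on `{1,…,d}`: the convex hull of the points
`eᵢ + e_j` over edges `{i,j}`. -/
def edgePolytope {d : ℕ} (G : SimpleGraph (Fin d)) : Set (Pt d) :=
  convexHull ℝ {x : Pt d | ∃ i j, G.Adj i j ∧
    x = fun k => (if k = i then (1:ℝ) else 0) + (if k = j then (1:ℝ) else 0)}

/-- A closed walk is an odd cycle. -/
def IsOddCycle {V : Type*} {G : SimpleGraph V} {u : V} (c : G.Walk u u) : Prop :=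
  c.IsCycle ∧ Odd c.length

/-- A cycle is minimal (chordless) if every edge of `G` between two of its vertices
is an edge of the cycle. -/
def Chordless {V : Type*} {G : SimpleGraph V} {u : V} (c : G.Walk u u) : Prop :=
  ∀ a b, a ∈ c.support → b ∈ c.support → G.Adj a b → s(a, b) ∈ c.edges

/-- Two cycles are vertex-disjoint. -/
def VertexDisjoint {V : Type*} {G : SimpleGraph V} {u v : V}
    (c : G.Walk u u) (c' : G.Walk v v) : Prop :=
  ∀ a, a ∈ c.support → a ∉ c'.support

/-- There is a bridge (an edge of `G`) between the two cycles. -/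
def HasBridge {V : Type*} {G : SimpleGraph V} {u v : V}
    (c : G.Walk u u) (c' : G.Walk v v) : Prop :=
  ∃ a b, a ∈ c.support ∧ b ∈ c'.support ∧ G.Adj a b

/-- An exceptional pair: vertex-disjoint odd cycles with no bridge between them. -/
def ExceptionalPair {V : Type*} {G : SimpleGraph V} {u v : V}
    (c : G.Walk u u) (c' : G.Walk v v) : Prop :=
  IsOddCycle c ∧ IsOddCycle c' ∧ VertexDisjoint c c' ∧ ¬ HasBridge c c'

/-- The odd cycle condition: any two vertex-disjoint odd cycles are joined by an edge. -/
def OddCycleCondition {V : Type*} (G : SimpleGraph V) : Prop :=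
  ∀ (u v : V) (c : G.Walk u u) (c' : G.Walk v v),
    IsOddCycle c → IsOddCycle c' → VertexDisjoint c c' → HasBridge c c'


namespace EdgePoly

open SimpleGraph

/-- The vector `(e_v, 1/2)`. -/
noncomputable def nu {d : ℕ} (v : Fin d) : Pt d × ℝ := (Pi.single v 1, 1 / 2)

/-- Sum of `nu` over the vertices of a walk, without the first one. -/
noncomputable def wsum {d : ℕ} {G : SimpleGraph (Fin d)} {u v : Fin d} (w : G.Walk u v) :
    Pt d × ℝ := (w.support.tail.map nu).sum

/-- Edge generators. -/
def EdgeSet {d : ℕ} (G : SimpleGraph (Fin d)) : Set (Pt d × ℝ) :=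
  {p | ∃ a b, G.Adj a b ∧ p = nu a + nu b}

/-- Exceptional generators. -/
def ExcSet {d : ℕ} (G : SimpleGraph (Fin d)) : Set (Pt d × ℝ) :=
  {p | ∃ (u v : Fin d) (c : G.Walk u u) (c' : G.Walk v v),
      ExceptionalPair c c' ∧ Chordless c ∧ Chordless c' ∧ p = wsum c + wsum c'}

/-- Chordless odd cycles. -/
def CycSet {d : ℕ} (G : SimpleGraph (Fin d)) : Set (Pt d × ℝ) :=
  {p | ∃ (u : Fin d) (c : G.Walk u u), IsOddCycle c ∧ Chordless c ∧ p = wsum c}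

variable {d : ℕ} {G : SimpleGraph (Fin d)}

lemma wsum_nil {u : Fin d} : wsum (Walk.nil : G.Walk u u) = 0 := by simp [wsum]

lemma wsum_cons {u v w : Fin d} (h : G.Adj u v) (p : G.Walk v w) :
    wsum (Walk.cons h p) = nu v + wsum p := by
  unfold wsum
  rw [Walk.support_cons, List.tail_cons]
  conv_lhs => rw [← Walk.cons_tail_support p]
  rw [List.map_cons, List.sum_cons]

lemma wsum_append {u v w : Fin d} (p : G.Walk u v) (q : G.Walk v w) :
    wsum (p.append q) = wsum p + wsum q := by
  simp [wsum, Walk.tail_support_append]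

lemma wsum_deg {u v : Fin d} (p : G.Walk u v) : (wsum p).2 = p.length / 2 := by
  induction p with
  | nil => simp [wsum_nil]
  | cons h p ih => rw [wsum_cons]; simp [ih, nu]; ring

lemma wsum_even_aux (n : ℕ) : ∀ {u v : Fin d} (p : G.Walk u v), p.length = 2 * n →
    wsum p ∈ AddSubmonoid.closure (EdgeSet G) := by
  induction n with
  | zero =>
    intro u v p hp
    cases p with
    | nil => rw [wsum_nil]; exact zero_mem _
    | cons h p => simp at hp
  | succ n ih =>
    intro u v p hp
    cases p with
    | nil => simp at hp
    | cons h p =>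
      cases p with
      | nil => simp at hp; omega
      | cons h' p =>
        simp only [Walk.length_cons] at hp
        rw [wsum_cons, wsum_cons, ← add_assoc]
        exact add_mem (AddSubmonoid.subset_closure ⟨_, _, h', rfl⟩) (ih p (by omega))

lemma wsum_even {u v : Fin d} (p : G.Walk u v) (hp : Even p.length) :
    wsum p ∈ AddSubmonoid.closure (EdgeSet G) := by
  obtain ⟨n, hn⟩ := hp
  exact wsum_even_aux n p (by omega)

lemma wsum_odd {u v : Fin d} (p : G.Walk u v) (hp : Odd p.length) :
    ∃ e ∈ AddSubmonoid.closure (EdgeSet G), wsum p = e + nu v := by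
  cases p with
  | nil => simp at hp
  | cons h p =>
    obtain ⟨x, q, h', hq⟩ := Walk.exists_cons_eq_concat h p
    rw [hq] at hp ⊢
    refine ⟨wsum q, wsum_even _ ?_, ?_⟩
    · rw [Walk.length_concat] at hp
      grind
    · rw [Walk.concat_eq_append, wsum_append, wsum_cons, wsum_nil, add_zero]

lemma wsum_two {u v : Fin d} (p : G.Walk u v) :
    ∃ e ∈ AddSubmonoid.closure (EdgeSet G), wsum p + wsum p + nu u = e + nu v := by
  induction p with
  | nil => exact ⟨0, zero_mem _, by simp [wsum_nil]⟩
  | @cons a b c h p ih =>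
    obtain ⟨e, he, h1⟩ := ih
    refine ⟨(nu a + nu b) + e, add_mem (AddSubmonoid.subset_closure ⟨_, _, h, rfl⟩) he, ?_⟩
    rw [wsum_cons, add_assoc (nu a + nu b), ← h1]
    abel

lemma wsum_closed_two {u : Fin d} (p : G.Walk u u) :
    wsum p + wsum p ∈ AddSubmonoid.closure (EdgeSet G) := by
  obtain ⟨e, he, h⟩ := wsum_two p
  rw [add_right_cancel h]; exact he

lemma wsum_rotate {u a : Fin d} (p : G.Walk u u) (h : a ∈ p.support) :
    wsum (p.rotate a h) = wsum p := by
  conv_rhs => rw [← Walk.take_spec p h]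
  rw [Walk.rotate, wsum_append, wsum_append, add_comm]

lemma length_rot {u a : Fin d} (p : G.Walk u u) (h : a ∈ p.support) :
    (p.rotate a h).length = p.length := by
  conv_rhs => rw [← Walk.take_spec p h]
  rw [Walk.rotate, Walk.length_append, Walk.length_append, add_comm]

lemma mem_support_rot {u a : Fin d} (p : G.Walk u u) (h : a ∈ p.support) (x : Fin d) :
    x ∈ (p.rotate a h).support ↔ x ∈ p.support := by
  conv_rhs => rw [← Walk.take_spec p h]
  rw [Walk.rotate, Walk.mem_support_append_iff, Walk.mem_support_append_iff, or_comm]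

lemma mem_edges_rot {u a : Fin d} (p : G.Walk u u) (h : a ∈ p.support) (x : Sym2 (Fin d)) :
    x ∈ (p.rotate a h).edges ↔ x ∈ p.edges := by
  conv_rhs => rw [← Walk.take_spec p h]
  rw [Walk.rotate, Walk.edges_append, Walk.edges_append, List.mem_append, List.mem_append, or_comm]

lemma exists_closed_of_not_path {u v : Fin d} (p : G.Walk u v) (hp : ¬ p.IsPath) :
    ∃ (x : Fin d) (p1 : G.Walk u x) (q : G.Walk x x) (p2 : G.Walk x v),
      p = p1.append (q.append p2) ∧ 0 < q.length := by
  induction p with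
  | nil => simp at hp
  | @cons a b c h p ih =>
    by_cases hpp : p.IsPath
    · have ha : a ∈ p.support := by
        by_contra hc
        exact hp (by simp [Walk.cons_isPath_iff, hpp, hc])
      refine ⟨a, Walk.nil, Walk.cons h (p.takeUntil a ha), p.dropUntil a ha, ?_, by simp⟩
      simp [Walk.take_spec]
    · obtain ⟨x, p1, q, p2, h1, h2⟩ := ih hpp
      exact ⟨x, Walk.cons h p1, q, p2, by rw [h1]; simp, h2⟩

lemma not_cycle_split {u : Fin d} (w : G.Walk u u) (hw : Odd w.length) (hc : ¬ w.IsCycle) :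
    ∃ (x : Fin d) (p1 : G.Walk u x) (q : G.Walk x x) (p2 : G.Walk x u),
      w = p1.append (q.append p2) ∧ 0 < q.length ∧ 0 < p1.length := by
  cases w with
  | nil => simp at hw
  | @cons _ b _ h p =>
    by_cases hpp : p.IsPath
    · exfalso
      apply hc
      rw [Walk.isCycle_iff_isPath_tail_and_le_length]
      refine ⟨by simpa using hpp, ?_⟩
      by_contra hlt
      have : (Walk.cons h p).length = 1 := by
        rcases hw with ⟨k, hk⟩; omega
      simp at this
      have := this.eq
      exact h.ne this.symm
    · obtain ⟨x, p1, q, p2, h1, h2⟩ := exists_closed_of_not_path p hpp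
      exact ⟨x, Walk.cons h p1, q, p2, by rw [h1]; simp, h2, by simp⟩

lemma chord_step {a b : Fin d} (p : G.Walk a b) (q : G.Walk b a) (hab : G.Adj a b)
    (hp : Even p.length) (hq : Odd q.length) (hne : s(a, b) ∉ q.edges) :
    ∃ (w' : G.Walk a a), Odd w'.length ∧ w'.length < p.length + q.length ∧
      ∃ e ∈ AddSubmonoid.closure (EdgeSet G), wsum p + wsum q = e + wsum w' := by
  obtain ⟨e, he, h1⟩ := wsum_odd q hq
  refine ⟨p.append (Walk.cons hab.symm Walk.nil), ?_, ?_, e, he, ?_⟩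
  · simp; grind
  · simp
    cases q with
    | nil => simp at hq
    | cons h q =>
      cases q with
      | nil => simp [Sym2.eq_swap] at hne
      | cons h' q => simp
  · rw [h1, wsum_append, wsum_cons, wsum_nil]; abel

lemma wsum_odd_closed (n : ℕ) : ∀ {u : Fin d} (w : G.Walk u u), w.length ≤ n → Odd w.length →
    ∃ e ∈ AddSubmonoid.closure (EdgeSet G), ∃ c ∈ CycSet G, wsum w = e + c := by
  induction n with
  | zero => intro u w h1 h2; rcases h2 with ⟨k, hk⟩; omega
  | succ n ih =>
    intro u w h1 h2
    by_cases hc : w.IsCycle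
    · by_cases hch : Chordless w
      · exact ⟨0, zero_mem _, wsum w, ⟨u, w, ⟨hc, h2⟩, hch, rfl⟩, by simp⟩
      · unfold Chordless at hch
        push Not at hch
        obtain ⟨a, b, ha, hb, hab, hne⟩ := hch
        have hb' : b ∈ (w.rotate a ha).support := (mem_support_rot w ha b).2 hb
        set r := w.rotate a ha with hr
        have hs := Walk.take_spec r hb'
        have hl : (r.takeUntil b hb').length + (r.dropUntil b hb').length = w.length := by
          rw [← length_rot w ha, ← Walk.length_append, hs]
        have hw : wsum w = wsum (r.takeUntil b hb') + wsum (r.dropUntil b hb') := by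
          rw [← wsum_rotate w ha, ← wsum_append, hs]
        have he : s(a, b) ∉ r.edges := by rwa [hr, mem_edges_rot]
        rw [← hs, Walk.edges_append, List.mem_append, not_or] at he
        obtain ⟨he1, he2⟩ := he
        rcases Nat.even_or_odd (r.takeUntil b hb').length with hev | hod
        · obtain ⟨w', hw1, hw2, e, hE, h3⟩ := chord_step (r.takeUntil b hb') (r.dropUntil b hb')
            hab hev (by grind) he2
          obtain ⟨e', he', c, hc, h4⟩ := ih w' (by omega) hw1
          exact ⟨e + e', add_mem hE he', c, hc, by rw [hw, h3, h4, add_assoc]⟩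
        · obtain ⟨w', hw1, hw2, e, hE, h3⟩ := chord_step (r.dropUntil b hb') (r.takeUntil b hb')
            hab.symm (by grind) hod (by rwa [Sym2.eq_swap])
          obtain ⟨e', he', c, hc, h4⟩ := ih w' (by omega) hw1
          exact ⟨e + e', add_mem hE he', c, hc, by rw [hw, add_comm, h3, h4, add_assoc]⟩
    · obtain ⟨x, p1, q, p2, rfl, hq, hp⟩ := not_cycle_split w h2 hc
      simp only [Walk.length_append] at h1 h2
      have hw : wsum (p1.append (q.append p2)) = wsum q + wsum (p1.append p2) := by
        simp only [wsum_append]; abel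
      rcases Nat.even_or_odd q.length with hev | hod
      · obtain ⟨e', he', c, hc, h4⟩ := ih (p1.append p2) (by simp; omega) (by simp; grind)
        exact ⟨wsum q + e', add_mem (wsum_even q hev) he', c, hc, by rw [hw, h4, add_assoc]⟩
      · obtain ⟨e', he', c, hc, h4⟩ := ih q (by omega) hod
        refine ⟨wsum (p1.append p2) + e', add_mem (wsum_even _ (by simp; grind)) he', c, hc, ?_⟩
        rw [hw, h4]; abel

/-- Two chordless odd cycles sum to an element of the generated monoid. -/
lemma cyc_add_cyc {p q : Pt d × ℝ} (hp : p ∈ CycSet G) (hq : q ∈ CycSet G) :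
    p + q ∈ AddSubmonoid.closure (EdgeSet G ∪ ExcSet G) := by
  have hle : AddSubmonoid.closure (EdgeSet G) ≤ AddSubmonoid.closure (EdgeSet G ∪ ExcSet G) :=
    AddSubmonoid.closure_mono Set.subset_union_left
  obtain ⟨u, c, hc, hcc, rfl⟩ := hp
  obtain ⟨v, c', hc', hcc', rfl⟩ := hq
  by_cases hx : ExceptionalPair c c'
  · exact AddSubmonoid.subset_closure (Or.inr ⟨u, v, c, c', hx, hcc, hcc', rfl⟩)
  · apply hle
    by_cases hd : VertexDisjoint c c'
    · have hb : HasBridge c c' := by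
        by_contra hb; exact hx ⟨hc, hc', hd, hb⟩
      obtain ⟨a, b, ha, hb, hab⟩ := hb
      obtain ⟨e, he, h1⟩ := wsum_odd (c.rotate a ha) (by rw [length_rot]; exact hc.2)
      obtain ⟨e', he', h2⟩ := wsum_odd (c'.rotate b hb) (by rw [length_rot]; exact hc'.2)
      rw [wsum_rotate] at h1 h2
      have : wsum c + wsum c' = e + e' + (nu a + nu b) := by rw [h1, h2]; abel
      rw [this]
      exact add_mem (add_mem he he') (AddSubmonoid.subset_closure ⟨a, b, hab, rfl⟩)
    · unfold VertexDisjoint at hd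
      push Not at hd
      obtain ⟨a, ha, hb⟩ := hd
      rw [← wsum_rotate c ha, ← wsum_rotate c' hb, ← wsum_append]
      apply wsum_even
      rw [Walk.length_append, length_rot, length_rot]
      exact hc.2.add_odd hc'.2

lemma edge_deg {p : Pt d × ℝ} (hp : p ∈ EdgeSet G) : p.2 = 1 := by
  obtain ⟨a, b, _, rfl⟩ := hp
  simp [nu]; norm_num

lemma exc_deg {p : Pt d × ℝ} {M : ℕ}
    (hM : M ∈ upperBounds {m : ℕ | ∃ (u v : Fin d) (c : G.Walk u u) (c' : G.Walk v v),
      ExceptionalPair c c' ∧ Chordless c ∧ Chordless c' ∧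
      m = (c.length + c'.length) / 2}) (hp : p ∈ ExcSet G) : ∃ n : ℕ, n ≤ M ∧ p.2 = n := by
  obtain ⟨u, v, c, c', h1, h2, h3, rfl⟩ := hp
  refine ⟨_, hM ⟨u, v, c, c', h1, h2, h3, rfl⟩, ?_⟩
  have hev : Even (c.length + c'.length) := h1.1.2.add_odd h1.2.1.2
  obtain ⟨k, hk⟩ := hev
  have : (c.length + c'.length) / 2 = k := by omega
  rw [this]
  have h4 : (c.length : ℝ) + c'.length = k + k := by exact_mod_cast hk
  simp [wsum_deg]; linarith

lemma exc_deg_int {p : Pt d × ℝ} (hp : p ∈ ExcSet G) : ∃ n : ℤ, p.2 = n := by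
  obtain ⟨u, v, c, c', h1, h2, h3, rfl⟩ := hp
  have hev : Even (c.length + c'.length) := h1.1.2.add_odd h1.2.1.2
  obtain ⟨k, hk⟩ := hev
  have h4 : (c.length : ℝ) + c'.length = k + k := by exact_mod_cast hk
  refine ⟨k, ?_⟩
  simp [wsum_deg]; linarith

lemma closure_deg_int {p : Pt d × ℝ} (hp : p ∈ AddSubmonoid.closure (EdgeSet G ∪ ExcSet G)) :
    ∃ n : ℤ, p.2 = n := by
  induction hp using AddSubmonoid.closure_induction with
  | mem x hx =>
    rcases hx with hx | hx
    · exact ⟨1, by simp [edge_deg hx]⟩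
    · exact exc_deg_int hx
  | zero => exact ⟨0, by simp⟩
  | add x y _ _ hx hy =>
    obtain ⟨a, ha⟩ := hx
    obtain ⟨b, hb⟩ := hy
    exact ⟨a + b, by simp [ha, hb]⟩

lemma closure_cyc {p : Pt d × ℝ} (hp : p ∈ AddSubmonoid.closure (EdgeSet G ∪ CycSet G))
    (hz : ∃ n : ℤ, p.2 = n) : p ∈ AddSubmonoid.closure (EdgeSet G ∪ ExcSet G) := by
  have key : p ∈ AddSubmonoid.closure (EdgeSet G ∪ ExcSet G) ∨
      ∃ q ∈ AddSubmonoid.closure (EdgeSet G ∪ ExcSet G), ∃ c ∈ CycSet G, p = c + q := by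
    clear hz
    induction hp using AddSubmonoid.closure_induction_left with
    | zero => left; exact zero_mem _
    | add_left x hx y _ ih =>
      rcases hx with hx | hx
      · have hx' : x ∈ AddSubmonoid.closure (EdgeSet G ∪ ExcSet G) :=
          AddSubmonoid.subset_closure (Or.inl hx)
        rcases ih with ih | ⟨q, hq, c, hc, rfl⟩
        · left; exact add_mem hx' ih
        · right; exact ⟨x + q, add_mem hx' hq, c, hc, by abel⟩
      · rcases ih with ih | ⟨q, hq, c, hc, rfl⟩
        · right; exact ⟨y, ih, x, hx, rfl⟩
        · left
          rw [← add_assoc]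
          exact add_mem (cyc_add_cyc hx hc) hq
  rcases key with h | ⟨q, hq, c, hc, rfl⟩
  · exact h
  · exfalso
    obtain ⟨n, hn⟩ := hz
    obtain ⟨m, hm⟩ := closure_deg_int hq
    obtain ⟨u, w, hw, _, rfl⟩ := hc
    obtain ⟨k, hk⟩ := hw.2
    rw [Prod.snd_add, hm, wsum_deg, hk] at hn
    have : (2 * k + 1 + 2 * m : ℤ) = 2 * n := by
      have : (2 * k + 1 + 2 * m : ℝ) = 2 * n := by rw [← hn]; push_cast; ring
      exact_mod_cast this
    omega

/-- The real cone, described by symmetric weight matrices. -/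
def RC (G : SimpleGraph (Fin d)) : Set (Pt d × ℝ) :=
  {p | ∃ c : Fin d → Fin d → ℝ, (∀ a b, 0 ≤ c a b) ∧ (∀ a b, c a b = c b a) ∧
    (∀ a b, ¬ G.Adj a b → c a b = 0) ∧ (∀ v, p.1 v = ∑ b, c v b) ∧ 2 * p.2 = ∑ v, p.1 v}

lemma RC_zero : (0 : Pt d × ℝ) ∈ RC G :=
  ⟨fun _ _ => 0, by simp, by simp, by simp, by simp, by simp⟩

lemma RC_add {p q : Pt d × ℝ} (hp : p ∈ RC G) (hq : q ∈ RC G) : p + q ∈ RC G := by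
  obtain ⟨c, h1, h2, h3, h4, h5⟩ := hp
  obtain ⟨c', h1', h2', h3', h4', h5'⟩ := hq
  refine ⟨fun a b => c a b + c' a b, fun a b => add_nonneg (h1 a b) (h1' a b), ?_, ?_, ?_, ?_⟩
  · intro a b; simp only [h2 a b, h2' a b]
  · intro a b h; simp only [h3 a b h, h3' a b h, add_zero]
  · intro v; simp [h4, h4', Finset.sum_add_distrib]
  · simp [mul_add, h5, h5', Finset.sum_add_distrib]

lemma RC_smul {p : Pt d × ℝ} (t : ℝ) (ht : 0 ≤ t) (hp : p ∈ RC G) : t • p ∈ RC G := by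
  obtain ⟨c, h1, h2, h3, h4, h5⟩ := hp
  refine ⟨fun a b => t * c a b, fun a b => mul_nonneg ht (h1 a b), ?_, ?_, ?_, ?_⟩
  · intro a b; simp only [h2 a b]
  · intro a b h; simp only [h3 a b h, mul_zero]
  · intro v; simp [h4, Finset.mul_sum]
  · have : 2 * (t • p).2 = t * (2 * p.2) := by simp; ring
    rw [this, h5]; simp [Finset.mul_sum]

lemma RC_edge {p : Pt d × ℝ} (hp : p ∈ EdgeSet G) : p ∈ RC G := by
  obtain ⟨a, b, hab, rfl⟩ := hp
  have hne := hab.ne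
  refine ⟨fun x y => if (x = a ∧ y = b) ∨ (x = b ∧ y = a) then 1 else 0, ?_, ?_, ?_, ?_, ?_⟩
  · intro x y; dsimp only; split_ifs <;> norm_num
  · intro x y; dsimp only; congr 1; grind
  · intro x y h
    apply if_neg
    rintro (⟨rfl, rfl⟩ | ⟨rfl, rfl⟩)
    · exact h hab
    · exact h hab.symm
  · intro v
    simp only [nu, Prod.fst_add, Pi.add_apply, Pi.single_apply]
    by_cases hva : v = a
    · subst hva; simp [hne]
    · by_cases hvb : v = b
      · subst hvb; simp [hne.symm]
      · simp [hva, hvb]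
  · simp [nu, Finset.sum_add_distrib, Pi.single_apply]; norm_num

lemma RC_sum {ι : Type*} (s : Finset ι) (f : ι → Pt d × ℝ) (h : ∀ i ∈ s, f i ∈ RC G) :
    ∑ i ∈ s, f i ∈ RC G := by
  classical
  induction s using Finset.induction_on with
  | empty => simpa using RC_zero
  | insert a s ha ih =>
    rw [Finset.sum_insert ha]
    exact RC_add (h a (by simp)) (ih fun i hi => h i (by simp [hi]))

lemma RC_poly {x : Pt d} (hx : x ∈ edgePolytope G) : (x, (1 : ℝ)) ∈ RC G := by
  have : edgePolytope G ⊆ {x : Pt d | (x, (1 : ℝ)) ∈ RC G} := by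
    apply convexHull_min
    · rintro x ⟨i, j, hij, rfl⟩
      have : (fun k => (if k = i then (1:ℝ) else 0) + (if k = j then (1:ℝ) else 0), (1 : ℝ)) =
          (nu i + nu j : Pt d × ℝ) := by
        ext k
        · simp [nu, Pi.single_apply]
        · simp [nu]; norm_num
      show (_, _) ∈ RC G
      rw [this]
      exact RC_edge ⟨i, j, hij, rfl⟩
    · intro x hx y hy a b ha hb hab
      have := RC_add (RC_smul a ha hx) (RC_smul b hb hy)
      show (_, _) ∈ RC G
      convert this using 1
      ext <;> simp [hab]
  exact this hx

lemma edge_mem_poly {a b : Fin d} (h : G.Adj a b) : (nu a + nu b : Pt d × ℝ).1 ∈ edgePolytope G := by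
  apply subset_convexHull
  refine ⟨a, b, h, ?_⟩
  ext k
  simp [nu, Pi.single_apply]

open Classical in
lemma sum_adj_subtype {A : Type*} [AddCommMonoid A] (F : Fin d × Fin d → A)
    (h : ∀ a b, ¬ G.Adj a b → F (a, b) = 0) :
    ∑ t : {x : Fin d × Fin d // G.Adj x.1 x.2}, F t.1 = ∑ t, F t := by
  rw [← Finset.sum_subtype (Finset.univ.filter fun x : Fin d × Fin d => G.Adj x.1 x.2)
    (by simp) F]
  apply Finset.sum_filter_of_ne
  intro x _ hx
  by_contra hc
  exact hx (h _ _ hc)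

lemma coneLat_iff (p : Pt d × ℝ) : p ∈ coneLat (edgePolytope G) ↔
    p ∈ RC G ∧ IsLat p.1 ∧ ∃ z : ℤ, p.2 = z := by
  constructor
  · rintro ⟨⟨m, c, w, h1, h2, h3⟩, h4⟩
    refine ⟨?_, h4⟩
    have : p = ∑ i, c i • (w i, (1 : ℝ)) := by
      ext
      · simp [h2, Prod.fst_sum]
      · simp [h3, Prod.snd_sum]
    rw [this]
    exact RC_sum _ _ fun i _ => RC_smul _ (h1 i).1 (RC_poly (h1 i).2)
  · rintro ⟨⟨c, h1, h2, h3, h4, h5⟩, h6⟩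
    refine ⟨?_, h6⟩
    classical
    let T := {x : Fin d × Fin d // G.Adj x.1 x.2}
    let e : Fin (Fintype.card T) ≃ T := (Fintype.equivFin T).symm
    refine ⟨Fintype.card T, fun i => c (e i).1.1 (e i).1.2 / 2,
      fun i => (nu (e i).1.1 + nu (e i).1.2 : Pt d × ℝ).1, ?_, ?_, ?_⟩
    · intro i
      exact ⟨by have := h1 (e i).1.1 (e i).1.2; positivity, edge_mem_poly (e i).2⟩
    · rw [Equiv.sum_comp e (fun t : T => (c t.1.1 t.1.2 / 2) • (nu t.1.1 + nu t.1.2 : Pt d × ℝ).1),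
        sum_adj_subtype (G := G) (fun t => (c t.1 t.2 / 2) • (nu t.1 + nu t.2 : Pt d × ℝ).1)
          (fun a b h => by simp [h3 _ _ h])]
      ext v
      rw [Fintype.sum_prod_type, h4]
      simp only [Finset.sum_apply, Pi.smul_apply, Prod.fst_add, Pi.add_apply, nu, Pi.single_apply,
        smul_eq_mul, mul_add, mul_ite, mul_one, mul_zero, Finset.sum_add_distrib]
      rw [Finset.sum_comm]
      simp only [Finset.sum_ite_eq, Finset.mem_univ, if_true]
      rw [← Finset.sum_add_distrib]
      refine Finset.sum_congr rfl fun b _ => ?_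
      rw [h2 b v]; ring
    · rw [Equiv.sum_comp e (fun t : T => c t.1.1 t.1.2 / 2),
        sum_adj_subtype (G := G) (fun t => c t.1 t.2 / 2) (fun a b h => by simp [h3 _ _ h])]
      rw [Fintype.sum_prod_type]
      simp only [← Finset.sum_div, ← h4, ← h5]
      ring

lemma RC_closure {p : Pt d × ℝ} (hp : p ∈ AddSubmonoid.closure (EdgeSet G)) : p ∈ RC G := by
  induction hp using AddSubmonoid.closure_induction with
  | mem x hx => exact RC_edge hx
  | zero => exact RC_zero
  | add x y _ _ hx hy => exact RC_add hx hy

lemma RC_wsum {u : Fin d} (w : G.Walk u u) : wsum w ∈ RC G := by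
  have := RC_smul (1/2) (by norm_num) (RC_closure (wsum_closed_two w))
  convert this using 1
  rw [← two_smul ℝ (wsum w), smul_smul]; norm_num

lemma isLat_add {x y : Pt d} (hx : IsLat x) (hy : IsLat y) : IsLat (x + y) := by
  intro i
  obtain ⟨a, ha⟩ := hx i
  obtain ⟨b, hb⟩ := hy i
  exact ⟨a + b, by simp [ha, hb]⟩

lemma isLat_nu (v : Fin d) : IsLat (nu v).1 := by
  intro i
  by_cases h : i = v
  · exact ⟨1, by simp [nu, h]⟩
  · exact ⟨0, by simp [nu, h]⟩

lemma isLat_wsum {u v : Fin d} (w : G.Walk u v) : IsLat (wsum w).1 := by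
  induction w with
  | nil => rw [wsum_nil]; exact fun i => ⟨0, by simp⟩
  | cons h p ih => rw [wsum_cons]; exact isLat_add (isLat_nu _) ih

lemma coneLat_add {p q : Pt d × ℝ} (hp : p ∈ coneLat (edgePolytope G))
    (hq : q ∈ coneLat (edgePolytope G)) : p + q ∈ coneLat (edgePolytope G) := by
  rw [coneLat_iff] at *
  obtain ⟨h1, h2, a, h3⟩ := hp
  obtain ⟨h1', h2', b, h3'⟩ := hq
  exact ⟨RC_add h1 h1', isLat_add h2 h2', a + b, by simp [h3, h3']⟩

lemma edge_coneLat {p : Pt d × ℝ} (hp : p ∈ EdgeSet G) : p ∈ coneLat (edgePolytope G) := by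
  rw [coneLat_iff]
  refine ⟨RC_edge hp, ?_, 1, by simp [edge_deg hp]⟩
  obtain ⟨a, b, _, rfl⟩ := hp
  exact isLat_add (isLat_nu a) (isLat_nu b)

lemma exc_coneLat {p : Pt d × ℝ} (hp : p ∈ ExcSet G) : p ∈ coneLat (edgePolytope G) := by
  rw [coneLat_iff]
  refine ⟨?_, ?_, exc_deg_int hp⟩
  · obtain ⟨u, v, c, c', _, _, _, rfl⟩ := hp
    exact RC_add (RC_wsum c) (RC_wsum c')
  · obtain ⟨u, v, c, c', _, _, _, rfl⟩ := hp
    exact isLat_add (isLat_wsum c) (isLat_wsum c')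

lemma closure_coneLat {p : Pt d × ℝ} (hp : p ∈ AddSubmonoid.closure (EdgeSet G ∪ ExcSet G)) :
    p ∈ coneLat (edgePolytope G) := by
  induction hp using AddSubmonoid.closure_induction with
  | mem x hx => exact hx.elim edge_coneLat exc_coneLat
  | zero =>
    rw [coneLat_iff]
    exact ⟨RC_zero, fun i => ⟨0, by simp⟩, 0, by simp⟩
  | add x y _ _ hx hy => exact coneLat_add hx hy

/-- Walk along the orbit of a permutation. -/
lemma orbit_walk {X : Type*} (l : X → Fin d) (σ : Equiv.Perm X)
    (hσ : ∀ x, σ x ≠ x → G.Adj (l x) (l (σ x))) (n : ℕ) : ∀ x y, σ x ≠ x → (σ ^ n) x = y →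
    ∃ w : G.Walk (l x) (l y), w.length = n ∧
      nu (l x) + wsum w = ((List.iterate σ x n).map fun y => nu (l y)).sum + nu (l y) := by
  induction n with
  | zero =>
    intro x y _ h
    have h' : x = y := h
    subst h'
    exact ⟨Walk.nil, by simp, by simp [wsum_nil]⟩
  | succ n ih =>
    intro x y hx hy
    have hp : (σ ^ n) (σ x) = y := by rw [← hy, pow_succ]; rfl
    obtain ⟨w, hw, hs⟩ := ih (σ x) y (by simpa using hx) hp
    refine ⟨Walk.cons (hσ x hx) w, by simp [hw], ?_⟩
    rw [wsum_cons, hs]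
    simp [List.iterate, add_assoc]

lemma perm_sum {X : Type*} [Fintype X] [DecidableEq X] (l : X → Fin d) (σ : Equiv.Perm X) :
    (∀ x, σ x ≠ x → G.Adj (l x) (l (σ x))) →
    ∑ x ∈ σ.support, nu (l x) ∈ AddSubmonoid.closure (EdgeSet G ∪ CycSet G) := by
  induction σ using Equiv.Perm.cycle_induction_on with
  | base_one => intro _; simp
  | base_cycles σ hc =>
    intro h
    obtain ⟨x, hx, -⟩ := id hc
    have hcs : (σ.cycleOf x) = σ := hc.cycleOf_eq hx
    have hone : (σ ^ σ.support.card) x = x := by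
      rw [← hc.orderOf, pow_orderOf_eq_one]; rfl
    obtain ⟨w, hw, hs⟩ := orbit_walk l σ h σ.support.card x x hx hone
    have hlist : List.iterate σ x σ.support.card = σ.toList x := by
      rw [Equiv.Perm.toList, hcs]
    have hfs : (σ.toList x).toFinset = σ.support := by
      ext y
      rw [List.mem_toFinset, Equiv.Perm.mem_toList_iff, Equiv.Perm.mem_support,
        Equiv.Perm.mem_support]
      constructor
      · rintro ⟨hxy, _⟩ hy
        exact hx (hxy.apply_eq_self_iff.2 hy)
      · intro hy
        exact ⟨hc.sameCycle hx hy, hx⟩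
    rw [hlist, ← List.sum_toFinset _ (Equiv.Perm.nodup_toList σ x), hfs, add_comm] at hs
    rw [← add_right_cancel hs]
    have hle : AddSubmonoid.closure (EdgeSet G) ≤ AddSubmonoid.closure (EdgeSet G ∪ CycSet G) :=
      AddSubmonoid.closure_mono Set.subset_union_left
    rcases Nat.even_or_odd w.length with hev | hod
    · exact hle (wsum_even w hev)
    · obtain ⟨e, he, c, hc, h4⟩ := wsum_odd_closed w.length w le_rfl hod
      rw [h4]
      exact add_mem (hle he) (AddSubmonoid.subset_closure (Or.inr hc))
  | induction_disjoint σ τ hd hc ih1 ih2 =>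
    intro h
    have hsup := hd.support_mul
    rw [hsup, Finset.sum_union (Equiv.Perm.disjoint_iff_disjoint_support.1 hd)]
    refine add_mem (ih1 ?_) (ih2 ?_)
    · intro x hx
      have : τ x = x := (hd x).resolve_left hx
      have h2 := h x (by simpa [this] using hx)
      simpa [this] using h2
    · intro x hx
      have : σ x = x := (hd x).resolve_right hx
      have hh : (σ * τ) x = τ x := by
        rw [hd.commute.eq]; simp [this]
      have h2 := h x (by rw [hh]; exact hx)
      rwa [hh] at h2

lemma closure_of_coneLat {p : Pt d × ℝ} (hp : p ∈ coneLat (edgePolytope G)) :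
    p ∈ AddSubmonoid.closure (EdgeSet G ∪ ExcSet G) := by
  classical
  rw [coneLat_iff] at hp
  obtain ⟨⟨c, h1, h2, h3, h4, h5⟩, hl, hz⟩ := hp
  refine closure_cyc ?_ hz
  have hα : ∀ v, ∃ n : ℕ, p.1 v = n := by
    intro v
    obtain ⟨z, hz⟩ := hl v
    have h0 : 0 ≤ p.1 v := by rw [h4]; exact Finset.sum_nonneg fun b _ => h1 v b
    rw [hz] at h0
    have h0' : 0 ≤ z := by exact_mod_cast h0
    lift z to ℕ using h0'
    exact ⟨z, by simpa using hz⟩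
  choose α hα using hα
  let X := Σ v, Fin (α v)
  let t : X → Finset X := fun x => Finset.univ.filter fun y => G.Adj x.1 y.1
  have hall : ∀ S : Finset X, S.card ≤ (S.biUnion t).card := by
    intro S
    let S' := S.image Sigma.fst
    let N := Finset.univ.filter fun w => ∃ v ∈ S', G.Adj v w
    have hS : S ⊆ S'.sigma fun _ => Finset.univ := by
      intro x hx
      exact Finset.mem_sigma.2 ⟨Finset.mem_image_of_mem _ hx, Finset.mem_univ _⟩
    have hN : (N.sigma fun _ => Finset.univ) ⊆ S.biUnion t := by
      intro y hy
      obtain ⟨v, hv', hv⟩ := (Finset.mem_filter.1 (Finset.mem_sigma.1 hy).1).2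
      obtain ⟨x, hx, rfl⟩ := Finset.mem_image.1 hv'
      exact Finset.mem_biUnion.2 ⟨x, hx, Finset.mem_filter.2 ⟨Finset.mem_univ _, hv⟩⟩
    refine (Finset.card_le_card hS).trans (le_trans ?_ (Finset.card_le_card hN))
    rw [Finset.card_sigma, Finset.card_sigma]
    simp only [Finset.card_univ, Fintype.card_fin]
    have : (∑ v ∈ S', (α v : ℝ)) ≤ ∑ v ∈ N, (α v : ℝ) := by
      calc ∑ v ∈ S', (α v : ℝ) = ∑ v ∈ S', ∑ b ∈ N, c v b := by
            refine Finset.sum_congr rfl fun v hv => ?_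
            rw [← hα, h4]
            symm
            apply Finset.sum_subset (Finset.subset_univ _)
            intro b _ hb
            apply h3
            intro hvb
            exact hb (by simp only [N, Finset.mem_filter, Finset.mem_univ, true_and]; exact ⟨v, hv, hvb⟩)
        _ = ∑ b ∈ N, ∑ v ∈ S', c v b := Finset.sum_comm
        _ ≤ ∑ b ∈ N, ∑ v, c b v := by
            refine Finset.sum_le_sum fun b _ => ?_
            rw [Finset.sum_congr rfl fun v _ => h2 v b]
            exact Finset.sum_le_sum_of_subset_of_nonneg (Finset.subset_univ _) fun _ _ _ => h1 _ _
        _ = ∑ v ∈ N, (α v : ℝ) := Finset.sum_congr rfl fun v _ => by rw [← hα, h4]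
    exact_mod_cast this
  obtain ⟨f, hf, hft⟩ := (Finset.all_card_le_biUnion_card_iff_exists_injective t).1 hall
  let σ : Equiv.Perm X := Equiv.ofBijective f (Finite.injective_iff_bijective.1 hf)
  have hadj : ∀ x, G.Adj x.1 (σ x).1 := by
    intro x
    exact (Finset.mem_filter.1 (hft x)).2
  have hsup : σ.support = Finset.univ := by
    ext x
    simp only [Equiv.Perm.mem_support, Finset.mem_univ, iff_true]
    intro hx
    have := hadj x
    rw [hx] at this
    exact G.loopless.irrefl _ this
  have hmem := perm_sum (G := G) (fun x : X => x.1) σ fun x _ => hadj x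
  rw [hsup] at hmem
  convert hmem using 1
  have hs : ∑ x : X, nu x.1 = ∑ v, (α v : ℝ) • (nu v : Pt d × ℝ) := by
    rw [Fintype.sum_sigma]
    refine Finset.sum_congr rfl fun v _ => ?_
    simp [Finset.sum_const, Nat.cast_smul_eq_nsmul]
  rw [hs]
  ext k
  · simp [Prod.fst_sum, nu, hα, Pi.single_apply]
  · simp only [Prod.snd_sum, nu, Prod.smul_mk, smul_eq_mul, ← hα]
    rw [← Finset.sum_mul, ← h5]; ring

lemma mem_edges_getVert {u v a b : Fin d} (w : G.Walk u v) (h : s(a, b) ∈ w.edges) :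
    ∃ i < w.length, s(a, b) = s(w.getVert i, w.getVert (i + 1)) := by
  induction w with
  | nil => simp at h
  | cons hh p ih =>
    rw [Walk.edges_cons, List.mem_cons] at h
    rcases h with h | h
    · exact ⟨0, by simp, by simpa using h⟩
    · obtain ⟨i, hi, he⟩ := ih h
      exact ⟨i + 1, by simpa using hi, by simpa using he⟩

lemma cycle_even_of_zero {v0 : Fin d} (w : G.Walk v0 v0) (hw : w.IsCycle)
    (m : Fin d → Fin d → ℝ) (hsym : ∀ a b, m a b = m b a)
    (hrow : ∀ a ∈ w.support, ∀ b, m a b ≠ 0 → s(a, b) ∈ w.edges) (h0 : ∀ b, m v0 b = 0) :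
    ∃ A : Finset (Fin d), ∑ v ∈ w.support.toFinset, ∑ b, m v b = 2 * ∑ v ∈ A, ∑ b, m v b := by
  classical
  let S := w.support.toFinset
  let A := ((Finset.range w.length).filter fun i => Odd i).image w.getVert
  have hA : ∀ i < w.length, (w.getVert i ∈ A ↔ Odd i) := by
    intro i hi
    constructor
    · intro h
      obtain ⟨j, hj, hji⟩ := Finset.mem_image.1 h
      simp only [Finset.mem_filter, Finset.mem_range] at hj
      have : j = i := hw.getVert_injOn' (by simp; omega) (by simp; omega) hji
      rw [← this]; exact hj.2
    · intro h
      exact Finset.mem_image_of_mem _ (by simp [hi, h])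
  have hAS : A ⊆ S := by
    intro x hx
    obtain ⟨j, _, rfl⟩ := Finset.mem_image.1 hx
    simp [S]
  have key : ∀ a b, s(a, b) ∈ w.edges → m a b ≠ 0 → (a ∈ A ↔ b ∉ A) := by
    intro a b hab hm
    have ha0 : a ≠ v0 := by rintro rfl; exact hm (h0 b)
    have hb0 : b ≠ v0 := by rintro rfl; exact hm (by rw [hsym]; exact h0 a)
    obtain ⟨i, hi, he⟩ := mem_edges_getVert w hab
    have hi' : i + 1 ≠ w.length := by
      intro hc
      rw [hc, Walk.getVert_length] at he
      rw [Sym2.eq_iff] at he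
      rcases he with ⟨_, h⟩ | ⟨h, _⟩
      · exact hb0 h
      · exact ha0 h
    have h1 := hA i hi
    have h2 := hA (i + 1) (by omega)
    rw [Nat.odd_add_one] at h2
    rw [Sym2.eq_iff] at he
    rcases he with ⟨rfl, rfl⟩ | ⟨rfl, rfl⟩ <;> tauto
  refine ⟨A, ?_⟩
  have e1 : ∑ v ∈ A, ∑ b, m v b = ∑ v ∈ A, ∑ b ∈ S \ A, m v b := by
    refine Finset.sum_congr rfl fun a ha => ?_
    symm
    apply Finset.sum_subset (Finset.subset_univ _)
    intro b _ hb
    by_contra hm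
    have he := hrow a (by simpa [S] using hAS ha) b hm
    have hbA := (key a b he hm).1 ha
    exact hb (by simp [S, hbA, Walk.snd_mem_support_of_mem_edges w he])
  have e2 : ∑ v ∈ S \ A, ∑ b, m v b = ∑ v ∈ S \ A, ∑ b ∈ A, m v b := by
    refine Finset.sum_congr rfl fun a ha => ?_
    symm
    apply Finset.sum_subset (Finset.subset_univ _)
    intro b _ hb
    by_contra hm
    rw [Finset.mem_sdiff] at ha
    have he := hrow a (by simpa [S] using ha.1) b hm
    exact ha.2 ((key a b he hm).2 hb)
  have e3 : ∑ v ∈ S \ A, ∑ b ∈ A, m v b = ∑ v ∈ A, ∑ b ∈ S \ A, m v b := by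
    rw [Finset.sum_comm]
    exact Finset.sum_congr rfl fun a _ => Finset.sum_congr rfl fun b _ => hsym _ _
  have : ∑ v ∈ S, ∑ b, m v b = ∑ v ∈ S \ A, ∑ b, m v b + ∑ v ∈ A, ∑ b, m v b :=
    (Finset.sum_sdiff hAS).symm
  change ∑ v ∈ S, ∑ b, m v b = _
  rw [this, e2, e3, ← e1]; ring

lemma toFinset_tail {u : Fin d} (c : G.Walk u u) (hc : c.IsCycle) :
    c.support.tail.toFinset = c.support.toFinset := by
  cases c with
  | nil => simp at hc
  | cons h p =>
    ext x
    simp only [Walk.support_cons, List.tail_cons, List.toFinset_cons, Finset.mem_insert,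
      List.mem_toFinset]
    constructor
    · exact Or.inr
    · rintro (rfl | h)
      · simp
      · exact h

lemma card_support {u : Fin d} (c : G.Walk u u) (hc : c.IsCycle) :
    c.support.toFinset.card = c.length := by
  rw [← toFinset_tail c hc, List.toFinset_card_of_nodup hc.support_nodup]
  simp

lemma wsum_cycle {u : Fin d} (c : G.Walk u u) (hc : c.IsCycle) :
    wsum c = ∑ v ∈ c.support.toFinset, nu v := by
  rw [← toFinset_tail c hc, List.sum_toFinset _ hc.support_nodup]
  rfl

lemma sum_nu_apply (S : Finset (Fin d)) (v : Fin d) :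
    (∑ x ∈ S, (nu x : Pt d × ℝ)).1 v = if v ∈ S then 1 else 0 := by
  simp [Prod.fst_sum, nu, Pi.single_apply]

lemma cycle_sum_ge {u : Fin d} (c : G.Walk u u) (hc : c.IsCycle) (hch : Chordless c)
    (m : Fin d → Fin d → ℝ) (hpos : ∀ a b, 0 ≤ m a b) (hsym : ∀ a b, m a b = m b a)
    (hadj : ∀ a b, ¬ G.Adj a b → m a b = 0)
    (hin : ∀ a ∈ c.support, ∀ b, m a b ≠ 0 → b ∈ c.support)
    (x : Pt d) (hx : IsLat x) (hxm : ∀ v, x v = ∑ b, m v b)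
    (hodd : ¬ ∃ z : ℤ, ∑ v ∈ c.support.toFinset, x v = 2 * z) :
    (c.length : ℝ) ≤ ∑ v ∈ c.support.toFinset, x v := by
  have hone : ∀ v ∈ c.support.toFinset, (1 : ℝ) ≤ x v := by
    intro v hv
    rw [List.mem_toFinset] at hv
    by_contra hlt
    have hx0 : x v = 0 := by
      have h0 : 0 ≤ x v := by rw [hxm]; exact Finset.sum_nonneg fun b _ => hpos v b
      obtain ⟨z, hz⟩ := hx v
      rw [hz] at h0 hlt ⊢
      push Not at hlt
      have a1 : 0 ≤ z := by exact_mod_cast h0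
      have a2 : z < 1 := by exact_mod_cast hlt
      have : z = 0 := by omega
      simp [this]
    have hrow0 : ∀ b, m v b = 0 := by
      intro b
      rw [hxm] at hx0
      exact (Finset.sum_eq_zero_iff_of_nonneg fun b _ => hpos v b).1 hx0 b (Finset.mem_univ _)
    obtain ⟨A, hA⟩ := cycle_even_of_zero (c.rotate v hv) (hc.rotate hv) m hsym (by
      intro a ha b hm
      rw [mem_support_rot] at ha
      rw [mem_edges_rot]
      exact hch a b ha (hin a ha b hm) (by by_contra hc; exact hm (hadj a b hc))) hrow0
    apply hodd
    have hS : (c.rotate v hv).support.toFinset = c.support.toFinset := by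
      ext y; rw [List.mem_toFinset, List.mem_toFinset, mem_support_rot]
    rw [hS] at hA
    simp only [← hxm] at hA
    choose z hz using hx
    exact ⟨∑ v ∈ A, z v, by rw [hA]; push_cast; simp only [hz]⟩
  calc (c.length : ℝ) = ∑ v ∈ c.support.toFinset, (1 : ℝ) := by
        rw [Finset.sum_const, card_support c hc]; simp
    _ ≤ _ := Finset.sum_le_sum hone

lemma RC_nonneg {p : Pt d × ℝ} (hp : p ∈ RC G) (v : Fin d) : 0 ≤ p.1 v := by
  obtain ⟨c, h1, h2, h3, h4, h5⟩ := hp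
  rw [h4]; exact Finset.sum_nonneg fun b _ => h1 v b

lemma exc_lower {u v : Fin d} {c : G.Walk u u} {c' : G.Walk v v} (hex : ExceptionalPair c c')
    (hc : Chordless c) (hc' : Chordless c') {p : Pt d × ℝ} (hp : p ∈ coneLat (edgePolytope G))
    (hz : ∀ i, i ∉ c.support → i ∉ c'.support → p.1 i = 0)
    (hodd : ¬ ∃ z : ℤ, ∑ v ∈ c.support.toFinset, p.1 v = 2 * z) :
    (c.length + c'.length : ℝ) ≤ 2 * p.2 := by
  rw [coneLat_iff] at hp
  obtain ⟨⟨m, h1, h2, h3, h4, h5⟩, hl, z, hzz⟩ := hp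
  obtain ⟨ho, ho', hdis, hbr⟩ := hex
  have hrow0 : ∀ a, p.1 a = 0 → ∀ b, m a b = 0 := by
    intro a ha b
    rw [h4] at ha
    exact (Finset.sum_eq_zero_iff_of_nonneg fun b _ => h1 a b).1 ha b (Finset.mem_univ _)
  have hmem : ∀ a b, m a b ≠ 0 → b ∈ c.support ∨ b ∈ c'.support := by
    intro a b hm
    by_contra hcon
    rw [not_or] at hcon
    exact hm (by rw [h2]; exact hrow0 b (hz b hcon.1 hcon.2) a)
  have hadj : ∀ a b, m a b ≠ 0 → G.Adj a b := by
    intro a b hm; by_contra hcon; exact hm (h3 a b hcon)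
  have hdisj : Disjoint c.support.toFinset c'.support.toFinset := by
    rw [Finset.disjoint_left]
    intro a ha hb
    rw [List.mem_toFinset] at ha hb
    exact hdis a ha hb
  have htot : 2 * p.2 = ∑ v ∈ c.support.toFinset, p.1 v + ∑ v ∈ c'.support.toFinset, p.1 v := by
    rw [h5, ← Finset.sum_union hdisj]
    symm
    apply Finset.sum_subset (Finset.subset_univ _)
    intro i _ hi
    simp only [Finset.mem_union, List.mem_toFinset, not_or] at hi
    exact hz i hi.1 hi.2
  have b1 := cycle_sum_ge c ho.1 hc m h1 h2 h3 (by
    intro a ha b hm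
    refine (hmem a b hm).resolve_right fun hb => ?_
    exact hbr ⟨a, b, ha, hb, hadj a b hm⟩) p.1 hl h4 hodd
  have b2 := cycle_sum_ge c' ho'.1 hc' m h1 h2 h3 (by
    intro a ha b hm
    refine (hmem a b hm).resolve_left fun hb => ?_
    exact hbr ⟨b, a, hb, ha, (hadj a b hm).symm⟩) p.1 hl h4 (by
    rintro ⟨y, hy⟩
    apply hodd
    refine ⟨z - y, ?_⟩
    push_cast
    rw [← hzz]
    linarith)
  linarith

lemma closure_parity {u v : Fin d} {c : G.Walk u u} {c' : G.Walk v v} (hex : ExceptionalPair c c')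
    (hc : Chordless c) (hc' : Chordless c') {p : Pt d × ℝ}
    (hp : p ∈ AddSubmonoid.closure
      {q | q ∈ coneLat (edgePolytope G) ∧ 2 * q.2 < (c.length + c'.length : ℝ)}) :
    (∀ i, 0 ≤ p.1 i) ∧ ((∀ i, i ∉ c.support → i ∉ c'.support → p.1 i = 0) →
      ∃ z : ℤ, ∑ v ∈ c.support.toFinset, p.1 v = 2 * z) := by
  induction hp using AddSubmonoid.closure_induction with
  | mem x hx =>
    refine ⟨RC_nonneg ((coneLat_iff x).1 hx.1).1, fun h => ?_⟩
    by_contra hcon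
    have := exc_lower hex hc hc' hx.1 h hcon
    linarith [hx.2]
  | zero => exact ⟨by simp, fun _ => ⟨0, by simp⟩⟩
  | add x y _ _ hx hy =>
    refine ⟨fun i => add_nonneg (hx.1 i) (hy.1 i), fun h => ?_⟩
    obtain ⟨a, ha⟩ := hx.2 fun i h1 h2 => by
      have e := h i h1 h2
      have := hx.1 i; have := hy.1 i
      simp only [Prod.fst_add, Pi.add_apply] at e
      linarith
    obtain ⟨b, hb⟩ := hy.2 fun i h1 h2 => by
      have e := h i h1 h2
      have := hx.1 i; have := hy.1 i
      simp only [Prod.fst_add, Pi.add_apply] at e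
      linarith
    refine ⟨a + b, ?_⟩
    simp only [Prod.fst_add, Pi.add_apply, Finset.sum_add_distrib, ha, hb]
    push_cast; ring

lemma gens_finite : (EdgeSet G ∪ ExcSet G).Finite := by
  apply (Set.finite_range fun S : Finset (Fin d) => ∑ v ∈ S, (nu v : Pt d × ℝ)).subset
  rintro p (⟨a, b, hab, rfl⟩ | ⟨u, v, c, c', hex, _, _, rfl⟩)
  · exact ⟨{a, b}, by simp [Finset.sum_pair hab.ne]⟩
  · refine ⟨c.support.toFinset ∪ c'.support.toFinset, ?_⟩
    simp only
    rw [Finset.sum_union, wsum_cycle c hex.1.1, wsum_cycle c' hex.2.1.1]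
    rw [Finset.disjoint_left]
    intro a ha hb
    rw [List.mem_toFinset] at ha hb
    exact hex.2.2.1 a ha hb

lemma coneLat_of_dil {k : ℕ} {x : Pt d} (hx : x ∈ latPts (dil k (edgePolytope G))) :
    (x, (k : ℝ)) ∈ coneLat (edgePolytope G) := by
  obtain ⟨⟨y, hy, rfl⟩, hl⟩ := hx
  exact ⟨⟨1, fun _ => k, fun _ => y, fun _ => ⟨Nat.cast_nonneg _, hy⟩, by simp, by simp⟩, hl,
    k, by simp⟩

lemma dil_of_coneLat {k : ℕ} (hk : 0 < k) {x : Pt d}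
    (hx : (x, (k : ℝ)) ∈ coneLat (edgePolytope G)) : x ∈ latPts (dil k (edgePolytope G)) := by
  obtain ⟨⟨m, c, w, h1, h2, h3⟩, hl, _⟩ := hx
  refine ⟨?_, hl⟩
  have hk' : (k : ℝ) ≠ 0 := by positivity
  simp only at h2 h3
  refine ⟨∑ i, (c i / k) • w i, ?_, ?_⟩
  · apply (convex_convexHull ℝ _).sum_mem
    · intro i _; have := (h1 i).1; positivity
    · rw [← Finset.sum_div, ← h3, div_self hk']
    · intro i _; exact (h1 i).2
  · simp only
    rw [h2, Finset.smul_sum]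
    refine Finset.sum_congr rfl fun i _ => ?_
    rw [smul_smul, mul_div_cancel₀ _ hk']

lemma dil_dil (n k : ℕ) (P : Set (Pt d)) : dil n (dil k P) = dil (n * k) P := by
  simp [dil, smul_smul]

lemma edge_list_deg (l : List (Pt d × ℝ)) (hl : ∀ y ∈ l, y ∈ EdgeSet G) :
    l.sum.2 = l.length := by
  induction l with
  | nil => simp
  | cons a l ih =>
    simp only [List.mem_cons, forall_eq_or_imp] at hl
    simp [ih hl.2, edge_deg hl.1]; ring

lemma edge_list_mem (l : List (Pt d × ℝ)) (hl : ∀ y ∈ l, y ∈ EdgeSet G) :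
    l.sum ∈ AddSubmonoid.closure (EdgeSet G ∪ ExcSet G) :=
  list_sum_mem fun y hy => AddSubmonoid.subset_closure (Or.inl (hl y hy))

/-- Every element of the monoid is a sum of edges and distinct exceptional elements. -/
lemma normal_form {p : Pt d × ℝ} (hp : p ∈ AddSubmonoid.closure (EdgeSet G ∪ ExcSet G)) :
    ∃ (e : Pt d × ℝ) (T : Finset (Pt d × ℝ)), e ∈ AddSubmonoid.closure (EdgeSet G) ∧
      (∀ s ∈ T, s ∈ ExcSet G) ∧ p = e + ∑ s ∈ T, s := by
  classical
  induction hp using AddSubmonoid.closure_induction_left with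
  | zero => exact ⟨0, ∅, zero_mem _, by simp, by simp⟩
  | add_left x hx y _ ih =>
    obtain ⟨e, T, he, hT, rfl⟩ := ih
    rcases hx with hx | hx
    · exact ⟨x + e, T, add_mem (AddSubmonoid.subset_closure hx) he, hT, by abel⟩
    · by_cases hxT : x ∈ T
      · have h2 : x + x ∈ AddSubmonoid.closure (EdgeSet G) := by
          obtain ⟨u, v, c, c', _, _, _, rfl⟩ := hx
          have : wsum c + wsum c' + (wsum c + wsum c') =
            (wsum c + wsum c) + (wsum c' + wsum c') := by abel
          rw [this]
          exact add_mem (wsum_closed_two c) (wsum_closed_two c')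
        refine ⟨(x + x) + e, T.erase x, add_mem h2 he,
          fun s hs => hT s (Finset.mem_of_mem_erase hs), ?_⟩
        rw [← Finset.add_sum_erase T (fun s => s) hxT]
        abel
      · refine ⟨e, insert x T, he, ?_, ?_⟩
        · intro s hs
          rcases Finset.mem_insert.1 hs with rfl | hs
          · exact hx
          · exact hT s hs
        · rw [Finset.sum_insert hxT]; abel

/-- Grouping into `n` elements of degree `M`. -/
lemma grouping {M : ℕ} (hM0 : 0 < M) (hM : ∀ s ∈ ExcSet G, ∃ n : ℕ, n ≤ M ∧ s.2 = n) (n : ℕ) :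
    ∀ (l : List (Pt d × ℝ)) (T : Finset (Pt d × ℝ)), (∀ y ∈ l, y ∈ EdgeSet G) →
      (∀ s ∈ T, s ∈ ExcSet G) → T.card ≤ n → (l.sum + ∑ s ∈ T, s).2 = n * M →
      ∃ f : Fin n → Pt d, (∀ i, f i ∈ latPts (dil M (edgePolytope G))) ∧
        (l.sum + ∑ s ∈ T, s).1 = ∑ i, f i := by
  classical
  induction n with
  | zero =>
    intro l T hl hT hc hd
    have : T = ∅ := Finset.card_eq_zero.1 (by omega)
    subst this
    simp only [Finset.sum_empty, add_zero, Nat.cast_zero, zero_mul] at hd ⊢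
    rw [edge_list_deg l hl] at hd
    have : l = [] := List.length_eq_zero_iff.1 (by exact_mod_cast hd)
    subst this
    exact ⟨fun i => i.elim0, fun i => i.elim0, by simp⟩
  | succ n ih =>
    intro l T hl hT hc hd
    -- the group: a set `T0` of at most one exceptional element, and the remaining `T1`
    have hsplit : ∃ (s0 : Pt d × ℝ) (T1 : Finset (Pt d × ℝ)) (j : ℕ), T1 ⊆ T ∧ T1.card ≤ n ∧
        s0 ∈ AddSubmonoid.closure (EdgeSet G ∪ ExcSet G) ∧ j ≤ M ∧ s0.2 = j ∧
        ∑ s ∈ T, s = s0 + ∑ s ∈ T1, s := by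
      rcases T.eq_empty_or_nonempty with rfl | ⟨s, hs⟩
      · exact ⟨0, ∅, 0, by simp, by simp, zero_mem _, by simp, by simp, by simp⟩
      · obtain ⟨j, hj, hsj⟩ := hM s (hT s hs)
        refine ⟨s, T.erase s, j, Finset.erase_subset _ _, ?_,
          AddSubmonoid.subset_closure (Or.inr (hT s hs)), hj, hsj,
          (Finset.add_sum_erase T (fun s => s) hs).symm⟩
        rw [Finset.card_erase_of_mem hs]; omega
    obtain ⟨s0, T1, j, hT1, hcard, hs0, hj, hsj, hsum⟩ := hsplit
    have hT1deg : (∑ s ∈ T1, s).2 ≤ n * M := by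
      rw [Prod.snd_sum]
      calc ∑ s ∈ T1, s.2 ≤ ∑ s ∈ T1, (M : ℝ) := by
            refine Finset.sum_le_sum fun s hs => ?_
            obtain ⟨i, hi, hsi⟩ := hM s (hT s (hT1 hs))
            rw [hsi]; exact_mod_cast hi
        _ = T1.card * M := by simp
        _ ≤ n * M := by gcongr
    have hdeg : (l.length : ℝ) + (j + (∑ s ∈ T1, s).2) = (n + 1) * M := by
      rw [hsum] at hd
      simp only [Prod.snd_add, hsj, edge_list_deg l hl] at hd
      push_cast at hd
      exact hd
    have hlen : M - j ≤ l.length := by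
      have : (M : ℝ) ≤ l.length + j := by linarith
      have : M ≤ l.length + j := by exact_mod_cast this
      omega
    have hl1 : ∀ y ∈ l.take (M - j), y ∈ EdgeSet G := fun y hy => hl y (List.mem_of_mem_take hy)
    have hl2 : ∀ y ∈ l.drop (M - j), y ∈ EdgeSet G := fun y hy => hl y (List.mem_of_mem_drop hy)
    have hld : (l.take (M - j)).sum + (l.drop (M - j)).sum = l.sum := by
      rw [← List.sum_append, List.take_append_drop]
    have hd1 : (l.take (M - j)).sum.2 = M - j := by
      rw [edge_list_deg _ hl1, List.length_take, min_eq_left hlen, Nat.cast_sub hj]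
    have hall : l.sum + ∑ s ∈ T, s = ((l.take (M - j)).sum + s0) +
        ((l.drop (M - j)).sum + ∑ s ∈ T1, s) := by
      rw [hsum, ← hld]; abel
    have hg : ((l.take (M - j)).sum + s0).2 = M := by
      simp [hd1, hsj]
    obtain ⟨f, hf, hfs⟩ := ih (l.drop (M - j)) T1 hl2 (fun s hs => hT s (hT1 hs)) hcard (by
      rw [hall, Prod.snd_add, hg] at hd
      push_cast at hd
      linarith)
    refine ⟨Fin.cons ((l.take (M - j)).sum + s0).1 f, ?_, ?_⟩
    · intro i
      refine Fin.cases ?_ (fun i => ?_) i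
      · rw [Fin.cons_zero]
        apply dil_of_coneLat hM0
        rw [← hg]
        exact closure_coneLat (add_mem (edge_list_mem _ hl1) hs0)
      · rw [Fin.cons_succ]; exact hf i
    · rw [hall, Prod.fst_add, hfs, Fin.sum_univ_succ]
      simp

end EdgePoly

open EdgePoly in
/-- for a connected graph `G` not satisfying the odd cycle condition,
`μ_va(P_G) = μ_Hilb(P_G) = max{(ℓ(C)+ℓ(C'))/2 : (C,C') exceptional pair of minimal
odd cycles}`. -/
theorem va_and_hilb_of_edgePolytope {d : ℕ} (G : SimpleGraph (Fin d))
    (hconn : G.Connected) (hocc : ¬ OddCycleCondition G)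
    (M : ℕ)
    (hM : IsGreatest {m : ℕ | ∃ (u v : Fin d) (c : G.Walk u u) (c' : G.Walk v v),
      ExceptionalPair c c' ∧ Chordless c ∧ Chordless c' ∧
      m = (c.length + c'.length) / 2} M) :
    IsLeast {k : ℕ | 0 < k ∧ VeryAmple (dil k (edgePolytope G))} M ∧
    ∀ H, IsMinHilbertBasis (edgePolytope G) H →
      IsGreatest {t : ℝ | ∃ p ∈ H, p.2 = t} (M : ℝ) := by
  classical
  obtain ⟨⟨u, v, c, c', hex, hc, hc', hMe⟩, hub⟩ := hM
  have hdeg : ∀ s ∈ ExcSet G, ∃ n : ℕ, n ≤ M ∧ s.2 = n := fun s hs => exc_deg hub hs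
  have h3 := hex.1.1.three_le_length
  have h3' := hex.2.1.1.three_le_length
  have hM0 : 0 < M := by omega
  have hMM : (c.length : ℝ) + c'.length = 2 * M := by
    obtain ⟨k, hk⟩ : Even (c.length + c'.length) := hex.1.2.add_odd hex.2.1.2
    have : c.length + c'.length = 2 * M := by omega
    exact_mod_cast this
  -- the exceptional element
  have heE : wsum c + wsum c' ∈ ExcSet G := ⟨u, v, c, c', hex, hc, hc', rfl⟩
  have hed : (wsum c + wsum c').2 = M := by
    rw [Prod.snd_add, wsum_deg, wsum_deg]; linarith
  have hez : ∀ i, i ∉ c.support → i ∉ c'.support → (wsum c + wsum c').1 i = 0 := by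
    intro i h1 h2
    rw [Prod.fst_add, Pi.add_apply, wsum_cycle c hex.1.1, wsum_cycle c' hex.2.1.1, sum_nu_apply,
      sum_nu_apply]
    simp [h1, h2]
  have hes : ∑ v ∈ c.support.toFinset, (wsum c + wsum c').1 v = c.length := by
    rw [← card_support c hex.1.1, Finset.cast_card]
    refine Finset.sum_congr rfl fun i hi => ?_
    rw [Prod.fst_add, Pi.add_apply, wsum_cycle c hex.1.1, wsum_cycle c' hex.2.1.1, sum_nu_apply,
      sum_nu_apply, if_pos hi, if_neg, add_zero]
    rw [List.mem_toFinset] at hi ⊢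
    exact hex.2.2.1 i hi
  refine ⟨⟨⟨hM0, ?_⟩, ?_⟩, ?_⟩
  · -- very ampleness
    refine ⟨(gens_finite (G := G)).toFinset.card, fun n hn α hα => ?_⟩
    rw [dil_dil] at hα
    obtain ⟨e, T, he, hT, hsum⟩ := normal_form (closure_of_coneLat (coneLat_of_dil hα))
    obtain ⟨l, hl, rfl⟩ := AddSubmonoid.exists_list_of_mem_closure he
    have hTn : T.card ≤ n := by
      refine le_trans (Finset.card_le_card ?_) hn
      intro s hs
      rw [Set.Finite.mem_toFinset]
      exact Or.inr (hT s hs)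
    obtain ⟨f, hf, hfs⟩ := grouping hM0 hdeg n l T hl hT hTn (by rw [← hsum]; push_cast; rfl)
    exact ⟨f, hf, by rw [← hfs, ← hsum]⟩
  · -- minimality
    rintro k ⟨hk0, k₀, hva⟩
    by_contra hlt
    push Not at hlt
    obtain ⟨a, b, hab, ha, hb⟩ : ∃ a b, G.Adj a b ∧ a ∈ c.support ∧ b ∈ c.support := by
      clear hes hez hed heE hMM hMe
      cases c with
      | nil => simp at h3
      | cons h p => exact ⟨_, _, h, by simp, by simp⟩
    let n := max k₀ M
    have hnk : M ≤ n * k := le_trans (le_max_right _ _) (Nat.le_mul_of_pos_right _ hk0)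
    let j := n * k - M
    let q : Pt d × ℝ := (wsum c + wsum c') + j • (nu a + nu b)
    have hedge : (nu a + nu b : Pt d × ℝ) ∈ AddSubmonoid.closure (EdgeSet G ∪ ExcSet G) :=
      AddSubmonoid.subset_closure (Or.inl ⟨a, b, hab, rfl⟩)
    have hexc : wsum c + wsum c' ∈ AddSubmonoid.closure (EdgeSet G ∪ ExcSet G) :=
      AddSubmonoid.subset_closure (Or.inr heE)
    have hq : q ∈ AddSubmonoid.closure (EdgeSet G ∪ ExcSet G) :=
      add_mem hexc (AddSubmonoid.nsmul_mem _ hedge j)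
    have hq2 : q.2 = ((n * k : ℕ) : ℝ) := by
      have h1 : (nu a + nu b : Pt d × ℝ).2 = 1 := edge_deg (G := G) ⟨a, b, hab, rfl⟩
      have h2 : ((M + j : ℕ) : ℝ) = ((n * k : ℕ) : ℝ) := by
        congr 1; simp only [j]; omega
      rw [← h2]
      simp only [q, Prod.snd_add (wsum c + wsum c'), Prod.smul_snd, h1, hed]
      simp
    have hqc := closure_coneLat hq
    have hq' : q.1 ∈ latPts (dil n (dil k (edgePolytope G))) := by
      rw [dil_dil]
      apply dil_of_coneLat (by omega)
      rw [← hq2]; exact hqc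
    obtain ⟨f, hf, hfs⟩ := hva n (le_max_left _ _) q.1 hq'
    have hcl : (∑ i, (f i, (k : ℝ))) ∈ AddSubmonoid.closure
      {q | q ∈ coneLat (edgePolytope G) ∧ 2 * q.2 < (c.length + c'.length : ℝ)} := by
      refine sum_mem fun i _ => AddSubmonoid.subset_closure ⟨coneLat_of_dil (hf i), ?_⟩
      rw [hMM]
      have : (k : ℝ) < M := by exact_mod_cast hlt
      simp only; linarith
    have hfst : (∑ i, (f i, (k : ℝ))).1 = q.1 := by rw [hfs, Prod.fst_sum]
    obtain ⟨z, hz⟩ := (closure_parity hex hc hc' hcl).2 (by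
      intro i h1 h2
      rw [hfst]
      have hia : i ≠ a := by rintro rfl; exact h1 ha
      have hib : i ≠ b := by rintro rfl; exact h1 hb
      simp only [q, Prod.fst_add (wsum c + wsum c'), Pi.add_apply (wsum c + wsum c').1, hez i h1 h2]
      simp [nu, hia, hib])
    rw [hfst] at hz
    have hs : ∑ v ∈ c.support.toFinset, q.1 v = c.length + 2 * j := by
      simp only [q, Prod.fst_add (wsum c + wsum c'), Pi.add_apply (wsum c + wsum c').1,
        Finset.sum_add_distrib, hes]
      simp [nu, Pi.single_apply, ← Finset.mul_sum, Finset.sum_add_distrib, ha, hb]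
      ring
    rw [hs] at hz
    have : (c.length : ℤ) + 2 * j = 2 * z := by exact_mod_cast hz
    obtain ⟨r, hr⟩ := hex.1.2
    omega
  · -- Hilbert basis
    intro H hH
    obtain ⟨⟨hfin, hsub, hgen⟩, hmin⟩ := hH
    have hHs : H ⊆ EdgeSet G ∪ ExcSet G := by
      apply hmin
      refine ⟨gens_finite, ?_, fun p hp => closure_of_coneLat hp⟩
      rintro p (hp | hp)
      · exact edge_coneLat hp
      · exact exc_coneLat hp
    have hle : ∀ p ∈ H, p.2 ≤ M := by
      intro p hp
      rcases hHs hp with h | h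
      · rw [edge_deg h]; exact_mod_cast hM0
      · obtain ⟨n, hn, hpn⟩ := hdeg p h
        rw [hpn]; exact_mod_cast hn
    refine ⟨?_, ?_⟩
    · by_contra hno
      have hlt : H ⊆ {q | q ∈ coneLat (edgePolytope G) ∧
          2 * q.2 < (c.length + c'.length : ℝ)} := by
        intro p hp
        refine ⟨hsub hp, ?_⟩
        have : p.2 < M := lt_of_le_of_ne (hle p hp) fun h => hno ⟨p, hp, h⟩
        linarith
      have hmem := AddSubmonoid.closure_mono hlt (hgen (exc_coneLat heE))
      obtain ⟨z, hz⟩ := (closure_parity hex hc hc' hmem).2 hez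
      rw [hes] at hz
      have : (c.length : ℤ) = 2 * z := by exact_mod_cast hz
      obtain ⟨r, hr⟩ := hex.1.2
      omega
    · rintro t ⟨p, hp, rfl⟩
      exact hle p hp
end

section
/- For any connected simple graph G, the edge polytope P_G possesses the integer decomposition property if and only if G satisfies the odd cycle condition (every pair of distinct odd cycles either shares a vertex or is joined by an edge). -/
open scoped BigOperators Pointwise

/-! ## Auxiliary material -/

/-- The standard basis vector. -/
def bv {d : ℕ} (i : Fin d) : Pt d := fun k => if k = i then (1:ℝ) else 0

/-- The edge vectors. -/
def edgeVecs {d : ℕ} (G : SimpleGraph (Fin d)) : Set (Pt d) :=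
  {x | ∃ i j, G.Adj i j ∧ x = bv i + bv j}

lemma edgePolytope_eq {d : ℕ} (G : SimpleGraph (Fin d)) :
    edgePolytope G = convexHull ℝ (edgeVecs G) := rfl

/-- The monoid generated by the edge vectors. -/
def edgeMon {d : ℕ} (G : SimpleGraph (Fin d)) : AddSubmonoid (Pt d) :=
  AddSubmonoid.closure (edgeVecs G)

/-- Sum of the basis vectors of a list of vertices. -/
def lvec {d : ℕ} (l : List (Fin d)) : Pt d := (l.map bv).sum

@[simp] lemma lvec_nil {d : ℕ} : lvec ([] : List (Fin d)) = 0 := rfl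
@[simp] lemma lvec_cons {d : ℕ} (a : Fin d) (l : List (Fin d)) :
    lvec (a :: l) = bv a + lvec l := by simp [lvec]

lemma lvec_perm {d : ℕ} {l l' : List (Fin d)} (h : l.Perm l') : lvec l = lvec l' :=
  (h.map bv).sum_eq

lemma edge_mem {d : ℕ} {G : SimpleGraph (Fin d)} {i j : Fin d} (h : G.Adj i j) :
    bv i + bv j ∈ edgeMon G :=
  AddSubmonoid.subset_closure ⟨i, j, h, rfl⟩

lemma bv_sum {d : ℕ} (i : Fin d) : ∑ k, bv i k = 1 := by simp [bv]

lemma lvec_sum {d : ℕ} (l : List (Fin d)) : ∑ k, lvec l k = l.length := by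
  induction l with
  | nil => simp
  | cons a l ih => simp [Finset.sum_add_distrib, ih, bv_sum]; ring

lemma edgeMon_list {d : ℕ} {G : SimpleGraph (Fin d)} {x : Pt d} (hx : x ∈ edgeMon G) :
    ∃ (n : ℕ) (f : Fin n → Pt d), (∀ i, f i ∈ edgeVecs G) ∧ x = ∑ i, f i ∧
      ∑ k, x k = 2 * n := by
  obtain ⟨l, hl, rfl⟩ := AddSubmonoid.exists_list_of_mem_closure hx
  refine ⟨l.length, fun i => l.get i, fun i => hl _ (List.get_mem _ _), ?_, ?_⟩
  · conv_lhs => rw [← List.ofFn_get l]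
    rw [List.sum_ofFn]
  · clear hx
    induction l with
    | nil => simp
    | cons a l ih =>
      have h1 := ih (fun y hy => hl y (List.mem_cons_of_mem _ hy))
      obtain ⟨i, j, -, rfl⟩ := hl _ List.mem_cons_self
      simp only [List.sum_cons, Pi.add_apply, Finset.sum_add_distrib, bv_sum, h1,
        List.length_cons]
      push_cast; ring

lemma walk_alt {d : ℕ} {G : SimpleGraph (Fin d)} : ∀ (n : ℕ) {u v : Fin d} (p : G.Walk u v),
    p.length = n →
    (Even n → lvec p.support.tail ∈ edgeMon G) ∧
    (Odd n → ∃ y ∈ edgeMon G, lvec p.support.tail = bv v + y) := by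
  intro n
  induction n using Nat.strong_induction_on with
  | _ n ih =>
    intro u v p hp
    cases p with
    | nil => subst hp; simp
    | @cons _ v1 _ h p =>
      cases p with
      | nil =>
        subst hp
        simp
      | @cons _ v2 _ h2 r =>
        simp only [SimpleGraph.Walk.length_cons] at hp
        obtain ⟨h3, h4⟩ := ih r.length (by omega) r rfl
        have hs : lvec ((SimpleGraph.Walk.cons h (SimpleGraph.Walk.cons h2 r)).support.tail)
            = bv v1 + bv v2 + lvec r.support.tail := by
          rw [SimpleGraph.Walk.support_cons, List.tail_cons, SimpleGraph.Walk.support_cons,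
            lvec_cons, ← SimpleGraph.Walk.cons_tail_support r, lvec_cons, List.tail_cons, add_assoc]
        rw [hs]
        constructor
        · intro he
          exact add_mem (edge_mem h2) (h3 (by grind))
        · intro ho
          obtain ⟨y, hy, hy2⟩ := h4 (by grind)
          refine ⟨_, add_mem (edge_mem h2) hy, ?_⟩
          rw [hy2]; abel

lemma walk_double {d : ℕ} {G : SimpleGraph (Fin d)} {u v : Fin d} (p : G.Walk u v) :
    ∃ y ∈ edgeMon G, bv u + (lvec p.support.tail + lvec p.support.tail) = bv v + y := by
  induction p with
  | nil => exact ⟨0, zero_mem _, by simp⟩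
  | @cons a b c h p ih =>
    obtain ⟨y, hy, h2⟩ := ih
    refine ⟨_, add_mem (edge_mem h) hy, ?_⟩
    rw [SimpleGraph.Walk.support_cons, List.tail_cons, ← SimpleGraph.Walk.cons_tail_support p]
    simp only [lvec_cons, List.tail_cons]
    calc _ = bv a + bv b + (bv b + (lvec p.support.tail + lvec p.support.tail)) := by abel
      _ = _ := by rw [h2]; abel

lemma odd_cycle_or_path {V : Type*} {G : SimpleGraph V} {u v : V} (p : G.Walk u v) :
    (∃ (a : V) (c : G.Walk a a), IsOddCycle c ∧ ∀ x ∈ c.support, x ∈ p.support) ∨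
    (∃ q : G.Walk u v, q.IsPath ∧ (Even q.length ↔ Even p.length) ∧
      ∀ x ∈ q.support, x ∈ p.support) := by
  classical
  induction p with
  | nil => exact Or.inr ⟨SimpleGraph.Walk.nil, SimpleGraph.Walk.IsPath.nil, by simp⟩
  | @cons u v w h p ih =>
    rcases ih with ⟨a, c, hc, hs⟩ | ⟨q, hq, hpar, hs⟩
    · exact Or.inl ⟨a, c, hc, fun x hx => by simp [hs x hx]⟩
    · by_cases hu : u ∈ q.support
      · have hlen := congrArg SimpleGraph.Walk.length (q.take_spec hu)
        rw [SimpleGraph.Walk.length_append] at hlen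
        by_cases he : Even (q.takeUntil u hu).length
        · left
          refine ⟨u, SimpleGraph.Walk.cons h (q.takeUntil u hu), ⟨?_, ?_⟩, ?_⟩
          · rw [SimpleGraph.Walk.cons_isCycle_iff]
            refine ⟨hq.takeUntil hu, fun hm => ?_⟩
            have := (hq.takeUntil hu).length_eq_one_of_mem_edges (by rwa [Sym2.eq_swap])
            rw [this] at he
            exact absurd he (by decide)
          · rw [SimpleGraph.Walk.length_cons]; grind
          · intro x hx
            rw [SimpleGraph.Walk.support_cons, List.mem_cons] at hx ⊢
            rcases hx with hx | hx
            · exact Or.inl hx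
            · exact Or.inr (hs x (q.support_takeUntil_subset_support hu hx))
        · right
          refine ⟨q.dropUntil u hu, hq.dropUntil hu, ?_, ?_⟩
          · rw [SimpleGraph.Walk.length_cons]
            rw [← hlen] at hpar
            grind
          · intro x hx
            rw [SimpleGraph.Walk.support_cons, List.mem_cons]
            exact Or.inr (hs x (q.support_dropUntil_subset_support hu hx))
      · right
        refine ⟨SimpleGraph.Walk.cons h q, hq.cons hu, ?_, ?_⟩
        · simp only [SimpleGraph.Walk.length_cons]; grind
        · intro x hx
          rw [SimpleGraph.Walk.support_cons, List.mem_cons] at hx ⊢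
          rcases hx with hx | hx
          · exact Or.inl hx
          · exact Or.inr (hs x hx)

lemma exists_odd_cycle {V : Type*} {G : SimpleGraph V} {u : V} (p : G.Walk u u)
    (hp : Odd p.length) :
    ∃ (a : V) (c : G.Walk a a), IsOddCycle c ∧ ∀ x ∈ c.support, x ∈ p.support := by
  rcases odd_cycle_or_path p with h | ⟨q, hq, hpar, -⟩
  · exact h
  · rw [SimpleGraph.Walk.isPath_iff_eq_nil] at hq
    subst hq
    simp at hpar
    grind

lemma odd_closed_sub {d : ℕ} {G : SimpleGraph (Fin d)} {u : Fin d} (p : G.Walk u u)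
    (hp : Odd p.length) {a : Fin d} (ha : a ∈ p.support) :
    ∃ y ∈ edgeMon G, lvec p.support.tail = bv a + y := by
  obtain ⟨y, hy, h⟩ := (walk_alt _ (p.rotate a ha) rfl).2 (by simpa using hp)
  exact ⟨y, hy, by rw [← h, lvec_perm (p.support_rotate a ha).perm]⟩

lemma odd_pair_adj {V : Type*} {G : SimpleGraph V} (hG : OddCycleCondition G) {u v : V}
    (p : G.Walk u u) (q : G.Walk v v) (hp : Odd p.length) (hq : Odd q.length) :
    ∃ a ∈ p.support, ∃ b ∈ q.support, G.Adj a b := by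
  classical
  by_cases hd : ∀ a, a ∈ p.support → a ∉ q.support
  · obtain ⟨a, c, hc, hcs⟩ := exists_odd_cycle p hp
    obtain ⟨b, c', hc', hcs'⟩ := exists_odd_cycle q hq
    obtain ⟨x, y, hx, hy, hxy⟩ := hG a b c c' hc hc'
      (fun x hx hx' => hd x (hcs x hx) (hcs' x hx'))
    exact ⟨x, hcs x hx, y, hcs' y hy, hxy⟩
  · push Not at hd
    obtain ⟨a, ha, ha'⟩ := hd
    have hmem := fun b => q.mem_support_rotate_iff (w := b) a ha'
    have hlen := q.length_rotate a ha'
    generalize q.rotate a ha' = r at hmem hlen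
    cases r with
    | nil => simp at hlen; rw [← hlen] at hq; simp at hq
    | @cons _ b _ h r =>
      exact ⟨a, ha, b, (hmem b).1 (by simp), h⟩

lemma odd_pair_mem {d : ℕ} {G : SimpleGraph (Fin d)} (hG : OddCycleCondition G) {u v : Fin d}
    (p : G.Walk u u) (q : G.Walk v v) (hp : Odd p.length) (hq : Odd q.length) :
    lvec p.support.tail + lvec q.support.tail ∈ edgeMon G := by
  obtain ⟨a, ha, b, hb, hab⟩ := odd_pair_adj hG p q hp hq
  obtain ⟨y, hy, h1⟩ := odd_closed_sub p hp ha
  obtain ⟨z, hz, h2⟩ := odd_closed_sub q hq hb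
  rw [h1, h2]
  have := add_mem (edge_mem hab) (add_mem hy hz)
  convert this using 1
  abel

/-- Vectors of closed walks. -/
def closedVecs {d : ℕ} (G : SimpleGraph (Fin d)) : Set (Pt d) :=
  {x | ∃ (u : Fin d) (p : G.Walk u u), x = lvec p.support.tail}

lemma closed_dichotomy {d : ℕ} {G : SimpleGraph (Fin d)} (hG : OddCycleCondition G) {x : Pt d}
    (hx : x ∈ AddSubmonoid.closure (closedVecs G)) :
    x ∈ edgeMon G ∨ ∃ y ∈ edgeMon G, ∃ (u : Fin d) (p : G.Walk u u), Odd p.length ∧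
      x = y + lvec p.support.tail := by
  induction hx using AddSubmonoid.closure_induction with
  | zero => exact Or.inl (zero_mem _)
  | mem x hx =>
    obtain ⟨u, p, rfl⟩ := hx
    rcases Nat.even_or_odd p.length with he | ho
    · exact Or.inl ((walk_alt _ p rfl).1 he)
    · exact Or.inr ⟨0, zero_mem _, u, p, ho, by simp⟩
  | add x y _ _ h1 h2 =>
    rcases h1 with h1 | ⟨y1, hy1, u, p, hp, rfl⟩ <;> rcases h2 with h2 | ⟨y2, hy2, v, q, hq, rfl⟩
    · exact Or.inl (add_mem h1 h2)
    · exact Or.inr ⟨x + y2, add_mem h1 hy2, v, q, hq, by abel⟩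
    · exact Or.inr ⟨y1 + y, add_mem hy1 h2, u, p, hp, by abel⟩
    · left
      have := add_mem (add_mem hy1 hy2) (odd_pair_mem hG p q hp hq)
      convert this using 1
      abel

lemma closed_even_mem {d : ℕ} {G : SimpleGraph (Fin d)} (hG : OddCycleCondition G) {x : Pt d}
    (hx : x ∈ AddSubmonoid.closure (closedVecs G)) (k : ℕ) (hk : ∑ i, x i = 2 * k) :
    x ∈ edgeMon G := by
  rcases closed_dichotomy hG hx with h | ⟨y, hy, u, p, hp, rfl⟩
  · exact h
  · exfalso
    obtain ⟨n, f, -, -, hn⟩ := edgeMon_list hy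
    simp only [Pi.add_apply, Finset.sum_add_distrib, hn, lvec_sum] at hk
    simp only [List.length_tail, SimpleGraph.Walk.length_support, Nat.add_sub_cancel] at hk
    have : 2 * n + p.length = 2 * k := by exact_mod_cast hk
    grind

lemma iterate_walk {d : ℕ} {G : SimpleGraph (Fin d)} {T : Type*} (π : T → Fin d)
    (σ : Equiv.Perm T) (t : T) (h : ∀ n : ℕ, G.Adj (π ((σ ^ n) t)) (π ((σ ^ (n+1)) t))) (n : ℕ) :
    ∃ p : G.Walk (π ((σ ^ n) t)) (π t),
      lvec p.support.tail = ∑ i ∈ Finset.range n, bv (π ((σ ^ i) t)) := by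
  induction n with
  | zero => exact ⟨(SimpleGraph.Walk.nil : G.Walk (π t) (π t)), rfl⟩
  | succ n ih =>
    obtain ⟨p, hp⟩ := ih
    refine ⟨SimpleGraph.Walk.cons (h n).symm p, ?_⟩
    rw [SimpleGraph.Walk.support_cons, List.tail_cons, ← SimpleGraph.Walk.cons_tail_support p,
      lvec_cons, hp, Finset.sum_range_succ, add_comm]

lemma perm_closed {d : ℕ} {G : SimpleGraph (Fin d)} {T : Type*} [Fintype T] [DecidableEq T]
    (π : T → Fin d) (σ : Equiv.Perm T) :
    (∀ t, σ t ≠ t → G.Adj (π t) (π (σ t))) →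
    ∑ t ∈ σ.support, bv (π t) ∈ AddSubmonoid.closure (closedVecs G) := by
  induction σ using Equiv.Perm.cycle_induction_on with
  | base_one => intro _; simp
  | base_cycles σ hσ =>
    intro hadj
    obtain ⟨t, ht⟩ := hσ.nonempty_support
    have ht' : σ t ≠ t := by simpa using ht
    have hne : ∀ n : ℕ, σ ((σ ^ n) t) ≠ (σ ^ n) t := by
      intro n
      have : (σ ^ n) t ∈ σ.support := Equiv.Perm.pow_apply_mem_support.2 ht
      simpa using this
    obtain ⟨p, hp⟩ := iterate_walk (G := G) π σ t (fun n => by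
      have := hadj _ (hne n)
      rwa [pow_succ', Equiv.Perm.mul_apply]) (orderOf σ)
    have hsum : ∑ t ∈ σ.support, bv (π t) = ∑ i ∈ Finset.range (orderOf σ), bv (π ((σ ^ i) t)) := by
      symm
      refine Finset.sum_nbij (fun i => (σ ^ i) t) ?_ ?_ ?_ ?_
      · intro i _
        exact Equiv.Perm.pow_apply_mem_support.2 ht
      · have hinj : Set.InjOn (fun i => (σ ^ i) t) (Finset.range (orderOf σ) : Set ℕ) := by
          intro i hi j hj hij
          simp only [Finset.coe_range, Set.mem_Iio] at hi hj
          have : σ ^ i = σ ^ j := hσ.pow_eq_pow_iff.2 ⟨t, ht', hij⟩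
          exact pow_injOn_Iio_orderOf hi hj this
        exact hinj
      · intro y hy
        obtain ⟨i, hi⟩ := hσ.exists_pow_eq ht' (by simpa using hy)
        refine ⟨i % orderOf σ, ?_, ?_⟩
        · simpa using Nat.mod_lt _ (orderOf_pos σ)
        · simp only [pow_mod_orderOf]; exact hi
      · intros; rfl
    rw [hsum, ← hp]
    apply AddSubmonoid.subset_closure
    have h1 : (σ ^ orderOf σ) t = t := by simp [pow_orderOf_eq_one]
    clear hp hsum
    generalize (σ ^ orderOf σ) t = s at p h1
    subst h1
    exact ⟨_, p, rfl⟩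
  | induction_disjoint σ τ hd _ h1 h2 =>
    intro hadj
    rw [hd.support_mul, Finset.sum_union hd.disjoint_support]
    refine add_mem (h1 fun t ht => ?_) (h2 fun t ht => ?_)
    · have h3 : τ t = t := (hd t).resolve_left ht
      have := hadj t (by simpa [h3] using ht)
      simpa [h3] using this
    · have h3 : σ (τ t) = τ t := (hd (τ t)).resolve_right (by simpa using ht)
      have := hadj t (by simpa [h3] using ht)
      simpa [h3] using this

/-- Points with a fractional representation. -/
def FracRep {d : ℕ} (G : SimpleGraph (Fin d)) (x : Pt d) : Prop :=
  ∃ w : Fin d → Fin d → ℝ, (∀ a b, 0 ≤ w a b) ∧ (∀ a b, w a b ≠ 0 → G.Adj a b) ∧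
    (∀ a b, w a b = w b a) ∧ ∀ a, x a = ∑ b, w a b

lemma fracRep_of_mem {d : ℕ} {G : SimpleGraph (Fin d)} {x : Pt d} (hx : x ∈ edgePolytope G) :
    FracRep G x ∧ ∑ i, x i = 2 := by
  have hsub : edgePolytope G ⊆ {x | FracRep G x ∧ ∑ i, x i = 2} := by
    rw [edgePolytope_eq]
    apply convexHull_min
    · rintro _ ⟨i, j, hij, rfl⟩
      refine ⟨⟨fun a b => bv i a * bv j b + bv j a * bv i b, ?_, ?_, ?_, ?_⟩, ?_⟩
      · intro a b
        simp only [bv]; positivity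
      · intro a b hab
        by_contra hn
        apply hab
        simp only [bv]
        have := hij.symm
        split_ifs <;> simp_all
      · intro a b; ring
      · intro a
        rw [Finset.sum_add_distrib, ← Finset.mul_sum, ← Finset.mul_sum, bv_sum, bv_sum]
        simp
      · simp only [Pi.add_apply, Finset.sum_add_distrib, bv_sum]; norm_num
    · rintro x ⟨⟨w, h1, h2, h3, h4⟩, h5⟩ y ⟨⟨w', h1', h2', h3', h4'⟩, h5'⟩ a b ha hb hab
      refine ⟨⟨fun i j => a * w i j + b * w' i j, ?_, ?_, ?_, ?_⟩, ?_⟩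
      · intro i j
        have := h1 i j
        have := h1' i j
        positivity
      · intro i j hij
        by_contra hn
        have e1 : w i j = 0 := by by_contra h; exact hn (h2 i j h)
        have e2 : w' i j = 0 := by by_contra h; exact hn (h2' i j h)
        simp [e1, e2] at hij
      · intro i j
        simp only [h3 i j, h3' i j]
      · intro i
        simp [Finset.sum_add_distrib, ← Finset.mul_sum, h4, h4']
      · simp only [Pi.add_apply, Pi.smul_apply, smul_eq_mul, Finset.sum_add_distrib,
          ← Finset.mul_sum, h5, h5']
        linear_combination 2 * hab
  exact hsub hx

lemma latPts_edge {d : ℕ} {G : SimpleGraph (Fin d)} {x : Pt d} (hx : x ∈ latPts (edgePolytope G)) :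
    x ∈ edgeVecs G := by
  obtain ⟨hx, hl⟩ := hx
  obtain ⟨⟨w, h1, h2, h3, h4⟩, h5⟩ := fracRep_of_mem hx
  have hnn : ∀ i, 0 ≤ x i := fun i => by rw [h4]; exact Finset.sum_nonneg fun b _ => h1 i b
  obtain ⟨i, -, hi⟩ := Finset.exists_ne_zero_of_sum_ne_zero (by rw [h5]; norm_num : ∑ i, x i ≠ 0)
  rw [h4] at hi
  obtain ⟨j, -, hj⟩ := Finset.exists_ne_zero_of_sum_ne_zero hi
  have hadj := h2 _ _ hj
  have hge : ∀ i j, w i j ≠ 0 → 1 ≤ x i := by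
    intro i j hj
    have hpos : 0 < x i := by
      rw [h4]
      exact Finset.sum_pos' (fun b _ => h1 i b) ⟨j, Finset.mem_univ _, lt_of_le_of_ne (h1 i j) hj.symm⟩
    obtain ⟨z, hz⟩ := hl i
    rw [hz] at hpos ⊢
    have : 0 < z := by exact_mod_cast hpos
    exact_mod_cast this
  have hxi := hge i j hj
  have hxj := hge j i (by rwa [h3])
  refine ⟨i, j, hadj, ?_⟩
  have hle : ∀ k, bv i k + bv j k ≤ x k := by
    intro k
    have := hadj.ne
    have := hnn k
    simp only [bv]
    split_ifs with e1 e2 e2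
    · simp_all
    · subst e1; simpa using hxi
    · subst e2; simpa using hxj
    · simpa using this
  have heq := (Finset.sum_eq_sum_iff_of_le (s := Finset.univ) (fun k _ => hle k)).1 (by
    rw [Finset.sum_add_distrib, bv_sum, bv_sum, h5]; norm_num)
  funext k
  exact (heq k (Finset.mem_univ _)).symm

lemma edge_latPts {d : ℕ} {G : SimpleGraph (Fin d)} {x : Pt d} (hx : x ∈ edgeVecs G) :
    x ∈ latPts (edgePolytope G) := by
  refine ⟨subset_convexHull ℝ _ hx, ?_⟩
  obtain ⟨i, j, -, rfl⟩ := hx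
  intro k
  refine ⟨(if k = i then 1 else 0) + (if k = j then 1 else 0), ?_⟩
  simp [bv]

lemma fracRep_closed {d : ℕ} {G : SimpleGraph (Fin d)} {x : Pt d} (hx : FracRep G x)
    (hl : IsLat x) : x ∈ AddSubmonoid.closure (closedVecs G) := by
  classical
  obtain ⟨w, h1, h2, h3, h4⟩ := hx
  have hnn : ∀ i, 0 ≤ x i := fun i => by rw [h4]; exact Finset.sum_nonneg fun b _ => h1 i b
  have hnat : ∀ i, ∃ n : ℕ, x i = n := by
    intro i
    obtain ⟨z, hz⟩ := hl i
    have := hnn i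
    rw [hz] at this
    have hz0 : 0 ≤ z := by exact_mod_cast this
    exact ⟨z.toNat, by rw [hz]; exact_mod_cast (Int.toNat_of_nonneg hz0).symm⟩
  choose n hn using hnat
  let T := Σ i : Fin d, Fin (n i)
  have hcard : ∀ S : Finset (Fin d),
      ((Finset.univ.filter fun t : T => t.1 ∈ S).card : ℝ) = ∑ i ∈ S, x i := by
    intro S
    have : (Finset.univ.filter fun t : T => t.1 ∈ S) = S.sigma (fun _ => Finset.univ) := by
      ext ⟨a, b⟩
      rw [Finset.mem_sigma]
      simp
    rw [this, Finset.card_sigma]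
    simp [hn]
  let nb : T → Finset T := fun t => Finset.univ.filter fun s : T => G.Adj t.1 s.1
  have hall : ∀ S : Finset T, S.card ≤ (S.biUnion nb).card := by
    intro S
    let A := S.image Sigma.fst
    let B := Finset.univ.filter fun b => ∃ a ∈ A, G.Adj a b
    have e1 : S ⊆ Finset.univ.filter fun t : T => t.1 ∈ A := by
      intro t ht
      simp only [Finset.mem_filter, Finset.mem_univ, true_and]
      exact Finset.mem_image_of_mem _ ht
    have e2 : (Finset.univ.filter fun t : T => t.1 ∈ B) ⊆ S.biUnion nb := by
      intro t ht
      simp only [Finset.mem_filter, Finset.mem_univ, true_and, B, A, Finset.mem_image] at ht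
      obtain ⟨a, ⟨s, hs, rfl⟩, hadj⟩ := ht
      simp only [Finset.mem_biUnion, nb, Finset.mem_filter, Finset.mem_univ, true_and]
      exact ⟨s, hs, hadj⟩
    have e3 : ∑ i ∈ A, x i ≤ ∑ i ∈ B, x i := by
      calc ∑ i ∈ A, x i = ∑ i ∈ A, ∑ j ∈ B, w i j := by
            refine Finset.sum_congr rfl fun i hi => ?_
            rw [h4]
            symm
            refine Finset.sum_subset (Finset.subset_univ _) fun j _ hj => ?_
            by_contra hne
            exact hj (by simpa [B] using ⟨i, hi, h2 _ _ hne⟩)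
        _ = ∑ j ∈ B, ∑ i ∈ A, w j i := by
            rw [Finset.sum_comm]
            exact Finset.sum_congr rfl fun j _ => Finset.sum_congr rfl fun i _ => h3 i j
        _ ≤ ∑ j ∈ B, x j := by
            refine Finset.sum_le_sum fun j _ => ?_
            rw [h4]
            exact Finset.sum_le_sum_of_subset_of_nonneg (Finset.subset_univ _)
              fun i _ _ => h1 j i
    rw [← hcard, ← hcard] at e3
    have e3' := Nat.cast_le.1 e3
    exact (Finset.card_le_card e1).trans (e3'.trans (Finset.card_le_card e2))
  obtain ⟨f, hf, hfm⟩ := (Finset.all_card_le_biUnion_card_iff_exists_injective nb).1 hall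
  have hadj : ∀ t : T, G.Adj t.1 (f t).1 := fun t => by simpa [nb] using hfm t
  let σ : Equiv.Perm T := Equiv.ofBijective f (Finite.injective_iff_bijective.1 hf)
  have hσ : ∀ t, σ t = f t := fun t => rfl
  have key := perm_closed (G := G) (T := T) Sigma.fst σ (fun t _ => hadj t)
  have hsupp : σ.support = Finset.univ := by
    ext t
    simp only [Equiv.Perm.mem_support, Finset.mem_univ, iff_true, hσ]
    intro h
    have := hadj t
    rw [h] at this
    exact this.ne rfl
  rw [hsupp] at key
  convert key using 1
  funext k
  rw [Finset.sum_apply, Fintype.sum_sigma]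
  have hi : ∀ i : Fin d, ∑ _j : Fin (n i), bv i k = if k = i then (n i : ℝ) else 0 := by
    intro i
    rw [Finset.sum_const, Finset.card_univ, Fintype.card_fin, nsmul_eq_mul]
    simp [bv]
  rw [Finset.sum_congr rfl fun i _ => hi i]
  simp [hn]

lemma idp_of_occ {d : ℕ} {G : SimpleGraph (Fin d)} (hG : OddCycleCondition G) :
    HasIDP (edgePolytope G) := by
  rintro k hk α ⟨hα, hl⟩
  obtain ⟨x, hx, rfl⟩ := Set.mem_smul_set.1 hα
  obtain ⟨⟨w, h1, h2, h3, h4⟩, h5⟩ := fracRep_of_mem hx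
  have hrep : FracRep G ((k : ℝ) • x) := by
    refine ⟨fun a b => k * w a b, fun a b => mul_nonneg (Nat.cast_nonneg _) (h1 a b),
      fun a b h => h2 a b (right_ne_zero_of_mul h), fun a b => by simp only [h3 a b], fun a => ?_⟩
    rw [← Finset.mul_sum, ← h4]; rfl
  have hsum : ∑ i, ((k : ℝ) • x) i = 2 * k := by
    simp only [Pi.smul_apply, smul_eq_mul, ← Finset.mul_sum, h5]; ring
  have hm := closed_even_mem hG (fracRep_closed hrep hl) k hsum
  obtain ⟨n, f, hf, he, hn⟩ := edgeMon_list hm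
  have hnk : n = k := by
    rw [hsum] at hn
    have : 2 * k = 2 * n := by exact_mod_cast hn
    omega
  subst hnk
  exact ⟨f, fun i => edge_latPts (hf i), he⟩

lemma lvec_isLat {d : ℕ} (l : List (Fin d)) : IsLat (lvec l) := by
  induction l with
  | nil => intro i; exact ⟨0, by simp⟩
  | cons a l ih =>
    intro i
    obtain ⟨z, hz⟩ := ih i
    refine ⟨(if i = a then 1 else 0) + z, ?_⟩
    simp [bv, hz]

lemma lvec_notMem {d : ℕ} {l : List (Fin d)} {i : Fin d} (h : i ∉ l) : lvec l i = 0 := by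
  induction l with
  | nil => simp
  | cons a l ih =>
    rw [List.mem_cons, not_or] at h
    simp [bv, h.1, ih h.2]

lemma occ_of_idp {d : ℕ} {G : SimpleGraph (Fin d)} (hG : HasIDP (edgePolytope G)) :
    OddCycleCondition G := by
  classical
  rintro u v c c' ⟨-, hc⟩ ⟨-, hc'⟩ hdisj
  by_contra hb
  obtain ⟨k, hk⟩ : ∃ k, c.length + c'.length = 2 * k := by
    obtain ⟨k, hk⟩ := hc.add_odd hc'
    exact ⟨k, by omega⟩
  have hk0 : 0 < k := by have := hc.pos; omega
  have hkR : (0:ℝ) < k := by exact_mod_cast hk0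
  set α : Pt d := lvec c.support.tail + lvec c'.support.tail with hα
  have hsumα : ∑ i, α i = 2 * k := by
    simp only [hα, Pi.add_apply, Finset.sum_add_distrib, lvec_sum]
    simp only [List.length_tail, SimpleGraph.Walk.length_support, Nat.add_sub_cancel]
    exact_mod_cast hk
  have h2α : α + α ∈ edgeMon G := by
    obtain ⟨y, hy, h1⟩ := walk_double c
    obtain ⟨y', hy', h1'⟩ := walk_double c'
    have e1 := add_left_cancel h1
    have e2 := add_left_cancel h1'
    have := add_mem hy hy'
    rw [← e1, ← e2] at this
    convert this using 1
    rw [hα]; abel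
  obtain ⟨n, g, hg, hge, hgn⟩ := edgeMon_list h2α
  have hn : (n : ℝ) = 2 * k := by
    simp only [Pi.add_apply, Finset.sum_add_distrib, hsumα] at hgn
    linarith
  have hmem : α ∈ latPts (dil k (edgePolytope G)) := by
    refine ⟨?_, ?_⟩
    · refine Set.mem_smul_set.2 ⟨∑ i, (1 / (n:ℝ)) • g i, ?_, ?_⟩
      · refine (convex_convexHull ℝ (edgeVecs G)).sum_mem (fun _ _ => by positivity) ?_
          (fun i _ => subset_convexHull ℝ _ (hg i))
        have : (n:ℝ) ≠ 0 := by rw [hn]; positivity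
        simp [this]
      · rw [← Finset.smul_sum, ← hge, hn, smul_smul, ← two_smul ℝ α, smul_smul]
        have : (k:ℝ) * (1 / (2 * k)) * 2 = 1 := by field_simp
        rw [this, one_smul]
    · intro i
      obtain ⟨z, hz⟩ := lvec_isLat c.support.tail i
      obtain ⟨z', hz'⟩ := lvec_isLat c'.support.tail i
      exact ⟨z + z', by simp [hα, hz, hz']⟩
  obtain ⟨f, hf, hfe⟩ := hG k hk0 α hmem
  have hfnn : ∀ i a, 0 ≤ f i a := by
    intro i a
    obtain ⟨p, q, -, h⟩ := latPts_edge (hf i)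
    rw [h]
    simp only [Pi.add_apply, bv]; positivity
  have hsupp : ∀ i a, f i a ≠ 0 → a ∈ c.support ∨ a ∈ c'.support := by
    intro i a h
    by_contra hn
    rw [not_or] at hn
    have h0 : α a = 0 := by
      simp only [hα, Pi.add_apply]
      rw [lvec_notMem (fun h => hn.1 (List.mem_of_mem_tail h)),
        lvec_notMem (fun h => hn.2 (List.mem_of_mem_tail h)), add_zero]
    rw [hfe, Finset.sum_apply, Finset.sum_eq_zero_iff_of_nonneg (fun i _ => hfnn i a)] at h0
    exact h (h0 i (Finset.mem_univ _))
  let C := c.support.toFinset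
  have hbC : ∀ a, ∑ b ∈ C, bv a b = if a ∈ C then 1 else 0 := by
    intro a; simp [bv]
  have hev : ∀ i, ∃ m : ℕ, ∑ a ∈ C, f i a = 2 * m := by
    intro i
    obtain ⟨p, q, hpq, h⟩ := latPts_edge (hf i)
    have hp := hsupp i p (by
      rw [h]; simp only [Pi.add_apply, bv, if_true]; positivity)
    have hq := hsupp i q (by
      rw [h]; simp only [Pi.add_apply, bv, if_true]; positivity)
    have hiff : p ∈ C ↔ q ∈ C := by
      simp only [C, List.mem_toFinset]
      constructor
      · intro h1
        by_contra h2
        exact hb ⟨p, q, h1, hq.resolve_left h2, hpq⟩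
      · intro h1
        by_contra h2
        exact hb ⟨q, p, h1, hp.resolve_left h2, hpq.symm⟩
    rw [h]
    simp only [Pi.add_apply, Finset.sum_add_distrib, hbC]
    by_cases hpC : p ∈ C
    · exact ⟨1, by rw [if_pos hpC, if_pos (hiff.1 hpC)]; norm_num⟩
    · exact ⟨0, by rw [if_neg hpC, if_neg (fun h => hpC (hiff.2 h))]; norm_num⟩
  choose m hm using hev
  have hs1 : ∑ a ∈ C, α a = 2 * ((∑ i, m i : ℕ) : ℝ) := by
    rw [hfe]
    simp only [Finset.sum_apply]
    rw [Finset.sum_comm]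
    simp only [hm]
    rw [← Finset.mul_sum]; push_cast; rfl
  have hs2 : ∑ a ∈ C, α a = c.length := by
    simp only [hα, Pi.add_apply, Finset.sum_add_distrib]
    have z1 : ∑ a ∈ C, lvec c'.support.tail a = 0 :=
      Finset.sum_eq_zero fun a ha => lvec_notMem fun h =>
        hdisj a (by simpa [C] using ha) (List.mem_of_mem_tail h)
    have z2 : ∑ a ∈ C, lvec c.support.tail a = ∑ a, lvec c.support.tail a :=
      Finset.sum_subset (Finset.subset_univ _) fun a _ ha => lvec_notMem fun h =>
        ha (by simpa [C] using List.mem_of_mem_tail h)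
    rw [z1, z2, lvec_sum]
    simp
  rw [hs1] at hs2
  have : 2 * (∑ i, m i) = c.length := by exact_mod_cast hs2
  grind

/-- the edge polytope of a connected simple graph `G` possesses (IDP)
if and only if `G` satisfies the odd cycle condition. -/
theorem edgePolytope_idp_iff_oddCycleCondition {d : ℕ} (G : SimpleGraph (Fin d))
    (hconn : G.Connected) :
    HasIDP (edgePolytope G) ↔ OddCycleCondition G :=
  ⟨occ_of_idp, idp_of_occ⟩
end
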